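/- Let D be a bounded open subset of ℂⁿ equipped with a system of approach regions A, let A ⊂ D̄ be nonempty and locally pluriregular with ω(·, A, D) < 1 on D, let z₀ ∈ D and ε > 0. Then there exist a bounded holomorphic map φ : E → ℂⁿ and a measurable set Γ₀ ⊂ ∂E such that: every point of Γ₀ is a density point of Γ₀; φ(0) = z₀; φ(E) ⊂ D̄; the angular boundary value φ(ζ) exists and lies in Ā for all ζ ∈ Γ₀; and 1 − mes(Γ₀)/(2π) < ω(z₀, A, D) + ε. -/

import Mathlib

open Complex Metric Filter Set MeasureTheory
open scoped Topology Real Manifold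

noncomputable section

variable {H : Type*} [NormedAddCommGroup H] [NormedSpace ℂ H]
  {M : Type*} [TopologicalSpace M] [ChartedSpace H M]

/-- Plurisubharmonic real-valued function on a subset `D` of a complex
manifold `M`: upper semicontinuous and satisfying the sub-mean value
inequality along every holomorphic disc whose image stays in `D`. -/
def PSHOnM (u : M → ℝ) (D : Set M) : Prop :=
  UpperSemicontinuousOn u D ∧
  ∀ (φ : ℂ → M) (U : Set ℂ), IsOpen U →
    MDifferentiableOn 𝓘(ℂ, ℂ) 𝓘(ℂ, H) φ U →
    ∀ z r, 0 < r → closedBall z r ⊆ U → (∀ w ∈ closedBall z r, φ w ∈ D) →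
    u (φ z) ≤ (1 / (2 * Real.pi)) *
      ∫ θ in (0:ℝ)..(2 * Real.pi), u (φ (z + Complex.ofReal r * Complex.exp (θ * Complex.I)))

/-- The (unregularized) extremal function `h_{A,D}` on a manifold, relative to
the canonical system of approach regions. -/
def hFunM (A D : Set M) : M → ℝ := fun z =>
  sSup ((fun u : M → ℝ => u z) ''
    {u | PSHOnM (H := H) u D ∧ (∀ x ∈ D, u x ≤ 1) ∧
      ∀ a ∈ A, Filter.limsup u (𝓝[D] a) ≤ 0})

/-- The relative extremal function `ω(·, A, D)` on a manifold (canonical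
approach regions): the upper semicontinuous regularization of `h_{A,D}`. -/
def omegaM (A D : Set M) (z : M) : ℝ :=
  Filter.limsup (hFunM (H := H) A D) (𝓝[D] z)

/-- A holomorphic disc on `M`: a holomorphic map defined on a neighborhood of
the closed unit disc. -/
def IsHoloDisc (φ : ℂ → M) : Prop :=
  ∃ U : Set ℂ, IsOpen U ∧ closedBall (0:ℂ) 1 ⊆ U ∧
    MDifferentiableOn 𝓘(ℂ, ℂ) 𝓘(ℂ, H) φ U

/-- The Poisson functional `P[u]` of a function `u` on a manifold `M`. -/
def poissonFunctional (u : M → ℝ) (z : M) : ℝ :=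
  sInf ((fun φ : ℂ → M => (1 / (2 * Real.pi)) *
      ∫ θ in (0:ℝ)..(2 * Real.pi), u (φ (Complex.exp (θ * Complex.I)))) ''
    {φ | IsHoloDisc (H := H) φ ∧ φ 0 = z})

/-- The data of a system of approach regions: a family of subsets attached to
each point. -/
structure ApproachData (X : Type*) where
  regions : X → Set (Set X)

/-- The axioms for a system of approach regions for an open set `D`. -/
def IsApproachSystem {X : Type*} [TopologicalSpace X] (D : Set X)
    (𝒜 : ApproachData X) : Prop :=
  (∀ ζ ∈ closure D, (𝒜.regions ζ).Nonempty) ∧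
  (∀ ζ : X, ∀ A ∈ 𝒜.regions ζ, IsOpen A ∧ A ⊆ D) ∧
  (∀ ζ ∈ D, ∀ U : Set X, IsOpen U → ζ ∈ U → ∃ A ∈ 𝒜.regions ζ, ζ ∈ A ∧ A ⊆ U) ∧
  (∀ ζ ∈ frontier D, ∀ A ∈ 𝒜.regions ζ, ζ ∈ closure A)

/-- Restriction of a system of approach regions to an open set `U`. -/
def ApproachData.restrict {X : Type*} (𝒜 : ApproachData X) (U : Set X) :
    ApproachData X :=
  ⟨fun ζ => (· ∩ U) '' 𝒜.regions ζ⟩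

/-- The `𝒜`-limsup of a function at a point: the supremum over the approach
regions at that point of the limsup through the region. -/
def ALimsup {X : Type*} [TopologicalSpace X] (𝒜 : ApproachData X)
    (u : X → ℝ) (ζ : X) : ℝ :=
  sSup ((fun A : Set X => Filter.limsup u (𝓝[A] ζ)) '' 𝒜.regions ζ)

/-- The extremal function `h_{A,D}` relative to a system of approach
regions. -/
def hFunA (𝒜 : ApproachData M) (A D : Set M) : M → ℝ := fun z =>
  sSup ((fun u : M → ℝ => u z) ''
    {u | PSHOnM (H := H) u D ∧ (∀ x ∈ D, u x ≤ 1) ∧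
      ∀ a ∈ A, ALimsup 𝒜 u a ≤ 0})

/-- The relative extremal function `ω(·, A, D)` relative to a system of
approach regions (the `𝒜`-limsup regularization of `h_{A,D}`). -/
def omegaA (𝒜 : ApproachData M) (A D : Set M) (z : M) : ℝ :=
  ALimsup 𝒜 (hFunA (H := H) 𝒜 A D) z

/-- `A` is locally pluriregular at `a` relative to a system of approach
regions. -/
def PlrgAtA (𝒜 : ApproachData M) (A D : Set M) (a : M) : Prop :=
  ∀ U : Set M, IsOpen U → a ∈ U →
    omegaA (H := H) (𝒜.restrict U) (A ∩ U) (D ∩ U) a = 0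

/-- The set `A* = (A ∩ ∂D) ∪ {a ∈ Ā ∩ D : A locally pluriregular at a}`. -/
def AstarA (𝒜 : ApproachData M) (A D : Set M) : Set M :=
  (A ∩ frontier D) ∪ {a ∈ closure A ∩ D | PlrgAtA (H := H) 𝒜 A D a}

/-- The set `Ã`: the union of all locally pluriregular sets `P ⊆ D̄` with
`P̄ ⊆ A*`. -/
def AtildeA (𝒜 : ApproachData M) (A D : Set M) : Set M :=
  ⋃₀ {P : Set M | P ⊆ closure D ∧ (∀ p ∈ P, PlrgAtA (H := H) 𝒜 P D p) ∧
    closure P ⊆ AstarA (H := H) 𝒜 A D}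

/-- The plurisubharmonic measure `ω̃(·, A, D) = ω(·, Ã, D)`. -/
def omegaTildeA (𝒜 : ApproachData M) (A D : Set M) (z : M) : ℝ :=
  omegaA (H := H) 𝒜 (AtildeA (H := H) 𝒜 A D) D z

/-- The set of end-points of an open set `Ω ⊆ D × G` with respect to the
product of two systems of approach regions. -/
def EndPoints {X Y : Type*} [TopologicalSpace X] [TopologicalSpace Y]
    (𝒜 : ApproachData X) (ℬ : ApproachData Y) (Ω : Set (X × Y)) : Set (X × Y) :=
  {p | ∀ Aα ∈ 𝒜.regions p.1, ∀ Bβ ∈ ℬ.regions p.2,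
    ∃ U : Set X, ∃ V : Set Y, IsOpen U ∧ p.1 ∈ U ∧ IsOpen V ∧ p.2 ∈ V ∧
      (U ∩ Aα) ×ˢ (V ∩ Bβ) ⊆ Ω}

/-- The Stolz (angular) approach region of aperture `α` at a boundary point
`ζ` of the unit disc. -/
def stolzRegion (α : ℝ) (ζ : ℂ) : Set ℂ :=
  {t ∈ ball (0:ℂ) 1 | |Complex.arg ((ζ - t) / ζ)| < α}

instance factTwoPiPos : Fact (0 < 2 * π) := ⟨Real.two_pi_pos⟩

/-- The circle of angles modulo `2π`. -/
abbrev Angles := AddCircle (2 * π)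

/-- The normalized Lebesgue measure on the circle of angles. -/
abbrev angleMeasure : Measure Angles := AddCircle.haarAddCircle

/-- The point of the unit circle with a given angle. -/
def circlePt (x : Angles) : ℂ := (AddCircle.toCircle x : ℂ)

lemma continuous_circlePt : Continuous circlePt :=
  continuous_subtype_val.comp AddCircle.continuous_toCircle

@[simp] lemma norm_circlePt (x : Angles) : ‖circlePt x‖ = 1 := Circle.norm_coe _

lemma circlePt_ne_zero (x : Angles) : circlePt x ≠ 0 := Circle.coe_ne_zero _

lemma circlePt_mem_closedBall (x : Angles) : circlePt x ∈ closedBall (0 : ℂ) 1 := by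
  simp

lemma circlePt_add (x y : Angles) : circlePt (x + y) = circlePt x * circlePt y := by
  simp [circlePt, AddCircle.toCircle_add]

lemma circlePt_nsmul (N : ℕ) (x : Angles) : circlePt (N • x) = circlePt x ^ N := by
  simp [circlePt, AddCircle.toCircle_nsmul]

lemma circlePt_coe (θ : ℝ) : circlePt (θ : Angles) = Complex.exp (θ * Complex.I) := by
  have h : 2 * π ≠ 0 := Real.two_pi_pos.ne'
  rw [circlePt, AddCircle.toCircle_apply_mk, Circle.coe_exp, div_self h, one_mul]

lemma exists_circlePt_eq {ζ : ℂ} (hζ : ‖ζ‖ = 1) : ∃ x, circlePt x = ζ := by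
  refine ⟨((Complex.arg ζ : ℝ) : Angles), ?_⟩
  rw [circlePt_coe]
  have := Complex.norm_mul_exp_arg_mul_I ζ
  rwa [hζ, Complex.ofReal_one, one_mul] at this

/-- Continuous functions on the circle are uniformly approximated by Laurent polynomials. -/
lemma exists_laurent_approx (f : C(Angles, ℂ)) {ε : ℝ} (hε : 0 < ε) :
    ∃ (M : ℕ) (p : Polynomial ℂ), ∀ x,
      ‖p.eval (circlePt x) / circlePt x ^ M - f x‖ < ε := by
  have hf : f ∈ (Submodule.span ℂ (range (@fourier (2 * π)))).topologicalClosure := by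
    rw [span_fourier_closure_eq_top]; trivial
  obtain ⟨g, hg, hgf⟩ := Metric.mem_closure_iff.1 hf ε hε
  have key : ∃ (M : ℕ) (p : Polynomial ℂ), ∀ x, g x * circlePt x ^ M = p.eval (circlePt x) := by
    clear hgf
    induction hg using Submodule.span_induction with
    | mem g hg =>
      obtain ⟨n, rfl⟩ := hg
      refine ⟨n.natAbs, Polynomial.X ^ (n + n.natAbs).toNat, fun x => ?_⟩
      have h1 : (fourier n x : ℂ) = circlePt x ^ n := by
        rw [fourier_apply, AddCircle.toCircle_zsmul]; simp [circlePt]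
      rw [h1, Polynomial.eval_pow, Polynomial.eval_X, ← zpow_natCast, ← zpow_natCast,
        ← zpow_add₀ (circlePt_ne_zero x)]
      congr 1
      omega
    | zero => exact ⟨0, 0, fun x => by simp⟩
    | add f g _ _ hf hg =>
      obtain ⟨M, p, hp⟩ := hf
      obtain ⟨N, q, hq⟩ := hg
      refine ⟨M + N, p * Polynomial.X ^ N + q * Polynomial.X ^ M, fun x => ?_⟩
      simp only [ContinuousMap.add_apply, Polynomial.eval_add, Polynomial.eval_mul, ← hp, ← hq,
        Polynomial.eval_pow, Polynomial.eval_X]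
      ring
    | smul c f _ hf =>
      obtain ⟨M, p, hp⟩ := hf
      refine ⟨M, Polynomial.C c * p, fun x => ?_⟩
      simp only [ContinuousMap.smul_apply, smul_eq_mul, Polynomial.eval_mul, Polynomial.eval_C,
        ← hp]
      ring
  obtain ⟨M, p, hp⟩ := key
  refine ⟨M, p, fun x => ?_⟩
  rw [← hp, mul_div_cancel_right₀ _ (pow_ne_zero _ (circlePt_ne_zero x)), ← dist_eq_norm, dist_comm]
  exact (ContinuousMap.dist_apply_le_dist x).trans_lt hgf

variable {F : Type*} [NormedAddCommGroup F] [NormedSpace ℂ F]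

/-- `ψ` is a uniform limit, on the closed unit disc, of entire maps having the same value at the
origin. -/
def EntireApproximable (ψ : ℂ → F) : Prop :=
  ∀ η : ℝ, 0 < η → ∃ g : ℂ → F, Differentiable ℂ g ∧ g 0 = ψ 0 ∧
    ∀ w ∈ closedBall (0 : ℂ) 1, ‖g w - ψ w‖ ≤ η

lemma Differentiable.entireApproximable {ψ : ℂ → F} (hψ : Differentiable ℂ ψ) :
    EntireApproximable ψ :=
  fun η hη => ⟨ψ, hψ, rfl, fun w _ => by simpa using hη.le⟩

lemma EntireApproximable.of_differentiableOn [CompleteSpace F] {ψ : ℂ → F} {U : Set ℂ}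
    (hU : IsOpen U) (hψ : DifferentiableOn ℂ ψ U) (hsub : closedBall (0 : ℂ) 1 ⊆ U) :
    EntireApproximable ψ := by
  intro η hη
  obtain ⟨δ, hδ, hδU⟩ := (isCompact_closedBall (0 : ℂ) 1).exists_cthickening_subset_open hU hsub
  rw [cthickening_closedBall hδ.le zero_le_one] at hδU
  let R : NNReal := ⟨δ + 1, by positivity⟩
  have hR : (0 : NNReal) < R := by
    rw [← NNReal.coe_pos]; change 0 < δ + 1; positivity
  have hps := (hψ.mono (show closedBall (0 : ℂ) R ⊆ U from hδU)).hasFPowerSeriesOnBall hR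
  let r : NNReal := ⟨δ / 2 + 1, by positivity⟩
  have hr : (r : ENNReal) < (R : ENNReal) := by
    rw [ENNReal.coe_lt_coe, ← NNReal.coe_lt_coe]
    change δ / 2 + 1 < δ + 1
    linarith
  have hlim := hps.tendstoUniformlyOn hr
  obtain ⟨n, hn, hn1⟩ := ((Metric.tendstoUniformlyOn_iff.1 hlim η hη).and
    (eventually_ge_atTop 1)).exists
  refine ⟨fun w => (cauchyPowerSeries ψ 0 R).partialSum n w, ?_, ?_, fun w hw => ?_⟩
  · unfold FormalMultilinearSeries.partialSum
    simp only [FormalMultilinearSeries.apply_eq_pow_smul_coeff]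
    fun_prop
  · have h1 : (cauchyPowerSeries ψ 0 R).partialSum n 0 = (cauchyPowerSeries ψ 0 R) 0 (fun _ => 0) := by
      unfold FormalMultilinearSeries.partialSum
      rw [Finset.sum_eq_single_of_mem 0 (by simp; omega)]
      intro k _ hk
      exact ((cauchyPowerSeries ψ 0 R) k).map_coord_zero ⟨0, Nat.pos_of_ne_zero hk⟩ rfl
    change (cauchyPowerSeries ψ 0 R).partialSum n 0 = _
    rw [h1]
    exact hps.coeff_zero _
  · have := hn w (by
      rw [mem_ball_zero_iff]
      change ‖w‖ < δ / 2 + 1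
      rw [mem_closedBall_zero_iff] at hw
      linarith)
    rw [zero_add, dist_comm, dist_eq_norm] at this
    exact this.le

/-- A perturbation `ψ + ∑ⱼ φⱼ(χⱼ ·)` of a disc along its boundary circle, with all values in an
open set, is realized up to a small error by an entire map, along a fast oscillating argument. -/
lemma exists_entire_near_perturbation {J : Type*} [Fintype J] {D : Set F} (hD : IsOpen D)
    {ψ : ℂ → F} (hψc : ContinuousOn ψ (closedBall 0 1)) (hψ : EntireApproximable ψ)
    (hψD : MapsTo ψ (closedBall 0 1) D) (φ : J → ℂ → F) (hφ : ∀ j, Differentiable ℂ (φ j))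
    (hφ0 : ∀ j, φ j 0 = 0) (χ : J → C(Angles, ℂ))
    (hGD : ∀ x, ∀ w ∈ closedBall (0 : ℂ) 1, ψ (circlePt x) + ∑ j, φ j (χ j x * w) ∈ D)
    {η : ℝ} (hη : 0 < η) :
    ∃ N : ℕ, ∀ c : ℂ, ‖c‖ = 1 → ∃ Φ : ℂ → F, Differentiable ℂ Φ ∧ Φ 0 = ψ 0 ∧
      MapsTo Φ (closedBall 0 1) D ∧
      ∀ x, ‖Φ (circlePt x) - (ψ (circlePt x) + ∑ j, φ j (χ j x * (c * circlePt x ^ N)))‖ < η := by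
  have hφc : ∀ j, Continuous (φ j) := fun j => (hφ j).continuous
  set G : Angles × ℂ → F := fun p => ψ (circlePt p.1) + ∑ j, φ j (χ j p.1 * p.2) with hG
  have hψcirc : Continuous fun x : Angles => ψ (circlePt x) :=
    hψc.comp_continuous continuous_circlePt circlePt_mem_closedBall
  have hGc : Continuous G := by
    refine (hψcirc.comp continuous_fst).add (continuous_finsetSum _ fun j _ => ?_)
    exact (hφc j).comp ((((χ j).continuous).comp continuous_fst).mul continuous_snd)
  have hK : IsCompact (ψ '' closedBall 0 1 ∪ G '' (univ ×ˢ closedBall 0 1)) :=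
    ((isCompact_closedBall 0 1).image_of_continuousOn hψc).union
      ((isCompact_univ.prod (isCompact_closedBall 0 1)).image hGc)
  obtain ⟨η₀, hη₀, hη₀D⟩ := hK.exists_thickening_subset_open hD (by
    rintro _ (⟨w, hw, rfl⟩ | ⟨⟨x, w⟩, hw, rfl⟩)
    · exact hψD hw
    · exact hGD x w hw.2)
  have near_ψ : ∀ w ∈ closedBall (0 : ℂ) 1, ∀ y, ‖y - ψ w‖ < η₀ → y ∈ D := fun w hw y hy =>
    hη₀D (mem_thickening_iff.2 ⟨ψ w, Or.inl ⟨w, hw, rfl⟩, by rwa [dist_eq_norm]⟩)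
  have near_G : ∀ x, ∀ w ∈ closedBall (0 : ℂ) 1, ∀ y, ‖y - G (x, w)‖ < η₀ → y ∈ D :=
    fun x w hw y hy => hη₀D
      (mem_thickening_iff.2 ⟨G (x, w), Or.inr ⟨(x, w), ⟨mem_univ _, hw⟩, rfl⟩, by
        rwa [dist_eq_norm]⟩)
  set η₁ := min η η₀ with hη₁def
  have hη₁ : 0 < η₁ := lt_min hη hη₀
  obtain ⟨g, hg, hg0, hgψ⟩ := hψ (η₁ / 3) (by positivity)
  set κ : ℝ := η₁ / (3 * (Fintype.card J + 1)) with hκ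
  have hκpos : 0 < κ := by positivity
  have hκsum : ∀ v : J → F, (∀ j, ‖v j‖ ≤ κ) → ‖∑ j, v j‖ ≤ η₁ / 3 := by
    intro v hv
    refine (norm_sum_le _ _).trans ((Finset.sum_le_sum fun j _ => hv j).trans ?_)
    rw [Finset.sum_const, nsmul_eq_mul, Finset.card_univ, hκ, mul_div_assoc', div_le_div_iff₀
      (by positivity) (by positivity)]
    nlinarith
  have hunif : ∀ j, ∃ δ > 0, ∀ x, ∀ w ∈ closedBall (0 : ℂ) 1, ∀ b, ‖b - χ j x * w‖ < δ →
      ‖φ j b - φ j (χ j x * w)‖ ≤ κ := by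
    intro j
    have hcomp : IsCompact ((fun p : Angles × ℂ => χ j p.1 * p.2) '' (univ ×ˢ closedBall 0 1)) :=
      (isCompact_univ.prod (isCompact_closedBall 0 1)).image (by fun_prop)
    have := hcomp.uniformContinuousAt_of_continuousAt (φ j)
      (fun a _ => (hφc j).continuousAt) (Metric.dist_mem_uniformity hκpos)
    obtain ⟨δ, hδ, h⟩ := Metric.mem_uniformity_dist.1 this
    refine ⟨δ, hδ, fun x w hw b hb => ?_⟩
    have h2 := h (a := χ j x * w) (b := b) (by rwa [dist_comm, dist_eq_norm])
      ⟨(x, w), ⟨mem_univ _, hw⟩, rfl⟩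
    have h3 : dist (φ j (χ j x * w)) (φ j b) < κ := h2
    rw [dist_comm, dist_eq_norm] at h3
    exact h3.le
  choose δ hδ hδφ using hunif
  choose M p hp using fun j => exists_laurent_approx (χ j) (hδ j)
  set h : J → ℂ → ℂ := fun j ζ => (p j).eval ζ / ζ ^ M j with hh
  have hcirc : ∀ x, ∀ w ∈ closedBall (0 : ℂ) 1,
      ‖g (circlePt x) + ∑ j, φ j (h j (circlePt x) * w) - G (x, w)‖ < η₁ := by
    intro x w hw
    have e1 : g (circlePt x) + ∑ j, φ j (h j (circlePt x) * w) - G (x, w) =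
        (g (circlePt x) - ψ (circlePt x)) +
          ∑ j, (φ j (h j (circlePt x) * w) - φ j (χ j x * w)) := by
      rw [hG, Finset.sum_sub_distrib]; dsimp only; abel
    rw [e1]
    have b1 := hgψ _ (circlePt_mem_closedBall x)
    have b2 := hκsum (fun j => φ j (h j (circlePt x) * w) - φ j (χ j x * w)) fun j => by
      refine hδφ j x w hw _ ?_
      rw [← sub_mul, norm_mul]
      refine (mul_le_of_le_one_right (norm_nonneg _) (by simpa using hw)).trans_lt (hp j x)
    refine (norm_add_le _ _).trans_lt ?_
    linarith
  -- near the boundary circle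
  have hOopen : IsOpen ({q : ℂ × ℂ | q.1 ≠ 0} ∩
      (fun q : ℂ × ℂ => g q.1 + ∑ j, φ j (h j q.1 * q.2)) ⁻¹' D) := by
    refine ContinuousOn.isOpen_inter_preimage ?_ ?_ hD
    · refine (hg.continuous.comp continuous_fst).continuousOn.add
        (continuousOn_finsetSum _ fun j _ => (hφc j).comp_continuousOn ?_)
      refine ContinuousOn.mul ?_ continuousOn_snd
      refine ContinuousOn.div ((p j).continuous.comp continuous_fst).continuousOn
        (by fun_prop) fun q hq => pow_ne_zero _ hq
    · exact isOpen_ne_fun continuous_fst continuous_const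
  obtain ⟨U, V, hU, -, hsU, hV, hUV⟩ := generalized_tube_lemma (isCompact_sphere (0 : ℂ) 1)
    (isCompact_closedBall (0 : ℂ) 1) hOopen (by
      rintro ⟨ζ, w⟩ ⟨hζ, hw⟩
      rw [mem_sphere_zero_iff_norm] at hζ
      obtain ⟨x, rfl⟩ := exists_circlePt_eq hζ
      exact ⟨circlePt_ne_zero x, near_G x w hw _ ((hcirc x w hw).trans_le (min_le_right _ _))⟩)
  obtain ⟨r, hr, hrU⟩ := (isCompact_sphere (0 : ℂ) 1).exists_thickening_subset_open hU hsU
  have hannulus : ∀ ζ : ℂ, 1 - min r (1 / 2) < ‖ζ‖ → ‖ζ‖ ≤ 1 → ζ ∈ U := by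
    intro ζ h1 h2
    have hmin1 := min_le_left r (1 / 2)
    have hmin2 := min_le_right r (1 / 2)
    have hpos : 0 < ‖ζ‖ := by linarith
    have hpos' : ((‖ζ‖ : ℝ) : ℂ) ≠ 0 := by exact_mod_cast hpos.ne'
    refine hrU (mem_thickening_iff.2 ⟨ζ / ‖ζ‖, ?_, ?_⟩)
    · rw [mem_sphere_zero_iff_norm, norm_div, Complex.norm_real, norm_norm, div_self hpos.ne']
    · have : ζ - ζ / ‖ζ‖ = (ζ / ‖ζ‖) * ((‖ζ‖ - 1 : ℝ) : ℂ) := by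
        push_cast
        field_simp
      rw [dist_eq_norm, this, norm_mul, norm_div, Complex.norm_real, norm_norm,
        div_self hpos.ne', one_mul, Complex.norm_real, Real.norm_eq_abs, abs_lt]
      constructor <;> linarith
  -- well inside the disc
  have hsmall : ∀ j, ∃ ρ > 0, ∀ w : ℂ, ‖w‖ < ρ → ‖φ j w‖ ≤ κ := by
    intro j
    obtain ⟨ρ, hρ, hb⟩ := Metric.continuousAt_iff.1 ((hφc j).continuousAt (x := 0)) κ hκpos
    refine ⟨ρ, hρ, fun w hw => ?_⟩
    have := hb (x := w) (by simpa using hw)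
    rw [hφ0, dist_zero_right] at this
    exact this.le
  choose ρ hρ hρφ using hsmall
  set s : ℝ := 1 - min r (1 / 2) with hs
  have hs0 : 0 ≤ s := by have := min_le_right r (1 / 2); linarith
  have hs1 : s < 1 := by have : 0 < min r (1 / 2) := by positivity
                         linarith
  have hbound : ∀ j, ∃ B : ℝ, ∀ ζ ∈ closedBall (0 : ℂ) 1, ‖(p j).eval ζ‖ ≤ B := fun j =>
    (isCompact_closedBall 0 1).exists_bound_of_continuousOn (p j).continuous.continuousOn
  choose B hB using hbound
  have hev : ∀ᶠ N : ℕ in atTop, ∀ j, M j + 1 ≤ N ∧ s ^ (N - M j) * B j < ρ j := by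
    refine eventually_all.2 fun j => (eventually_ge_atTop _).and ?_
    have : Tendsto (fun N : ℕ => s ^ (N - M j) * B j) atTop (𝓝 (0 * B j)) :=
      ((tendsto_pow_atTop_nhds_zero_of_lt_one hs0 hs1).comp
        (tendsto_sub_atTop_nat (M j))).mul_const _
    rw [zero_mul] at this
    exact this.eventually_lt_const (hρ j)
  obtain ⟨N, hN⟩ := hev.exists
  refine ⟨N, fun c hc => ?_⟩
  set Φ : ℂ → F := fun ζ => g ζ + ∑ j, φ j (c * ζ ^ (N - M j) * (p j).eval ζ) with hΦ
  have hΦeq : ∀ ζ : ℂ, ζ ≠ 0 → Φ ζ = g ζ + ∑ j, φ j (h j ζ * (c * ζ ^ N)) := by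
    intro ζ hζ
    simp only [hΦ, hh]
    congr 1
    refine Finset.sum_congr rfl fun j _ => ?_
    congr 1
    have h1 : ζ ^ N = ζ ^ (N - M j) * ζ ^ M j := by
      rw [← pow_add]; congr 1; have := (hN j).1; omega
    rw [h1]
    field_simp
  refine ⟨Φ, ?_, ?_, ?_, ?_⟩
  · refine hg.add (Differentiable.fun_sum fun j _ => (hφ j).comp ?_)
    exact ((differentiable_const c).mul (differentiable_id.pow _)).mul (p j).differentiable
  · simp only [hΦ]
    rw [Finset.sum_eq_zero, add_zero, hg0]
    intro j _
    have : N - M j ≠ 0 := by have := (hN j).1; omega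
    rw [zero_pow this, mul_zero, zero_mul, hφ0]
  · intro ζ hζ
    have hζ1 : ‖ζ‖ ≤ 1 := by simpa using hζ
    rcases lt_or_ge s ‖ζ‖ with hsζ | hsζ
    · have hUζ := hannulus ζ hsζ hζ1
      have hcw : c * ζ ^ N ∈ closedBall (0 : ℂ) 1 := by
        rw [mem_closedBall_zero_iff, norm_mul, hc, one_mul, norm_pow]
        exact pow_le_one₀ (norm_nonneg _) hζ1
      have := hUV (show (ζ, c * ζ ^ N) ∈ U ×ˢ V from ⟨hUζ, hV hcw⟩)
      rw [hΦeq ζ this.1]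
      exact this.2
    · refine near_ψ ζ hζ _ ?_
      have e1 : Φ ζ - ψ ζ = (g ζ - ψ ζ) + ∑ j, φ j (c * ζ ^ (N - M j) * (p j).eval ζ) := by
        simp only [hΦ]; abel
      have b2 := hκsum (fun j => φ j (c * ζ ^ (N - M j) * (p j).eval ζ)) fun j => by
        refine hρφ j _ (lt_of_le_of_lt ?_ (hN j).2)
        rw [norm_mul, norm_mul, hc, one_mul, norm_pow]
        exact mul_le_mul (pow_le_pow_left₀ (norm_nonneg _) hsζ _) (hB j ζ hζ) (norm_nonneg _)
          (pow_nonneg hs0 _)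
      have b1 := hgψ ζ hζ
      have b3 : η₁ ≤ η₀ := min_le_right _ _
      rw [e1]
      refine (norm_add_le _ _).trans_lt ?_
      linarith
  · intro x
    rw [hΦeq _ (circlePt_ne_zero x)]
    refine (hcirc x (c * circlePt x ^ N) ?_).trans_le (min_le_left _ _)
    simp [hc]

lemma exists_shear_measure_le (N : ℕ) {B : Set (Angles × Angles)} (hB : MeasurableSet B) :
    ∃ t : Angles, angleMeasure {x | (x, N • x + t) ∈ B} ≤ (angleMeasure.prod angleMeasure) B := by
  have hmeas : Measurable fun p : Angles × Angles => (p.2, N • p.2 + p.1) := by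
    have : Continuous fun p : Angles × Angles => (p.2, N • p.2 + p.1) := by fun_prop
    exact this.measurable
  have hsk : MeasurePreserving (fun p : Angles × Angles => (p.1, N • p.1 + p.2))
      (angleMeasure.prod angleMeasure) (angleMeasure.prod angleMeasure) := by
    refine (MeasurePreserving.id angleMeasure).skew_product
      (g := fun x t => N • x + t) ?_ (ae_of_all _ fun x => ?_)
    · have : Continuous fun p : Angles × Angles => N • p.1 + p.2 := by fun_prop
      exact this.measurable
    · exact map_add_left_eq_self _ _
  have hsw : MeasurePreserving (fun p : Angles × Angles => (p.2, N • p.2 + p.1))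
      (angleMeasure.prod angleMeasure) (angleMeasure.prod angleMeasure) :=
    hsk.comp Measure.measurePreserving_swap
  have h1 := hsw.measure_preimage hB.nullMeasurableSet
  rw [Measure.prod_apply (hmeas hB)] at h1
  obtain ⟨t, ht⟩ := exists_le_lintegral (μ := angleMeasure)
    (measurable_measure_prodMk_left (ν := angleMeasure) (hmeas hB)).aemeasurable
  exact ⟨t, ht.trans h1.le⟩

lemma exists_isCompact_measure_compl_le {X : Type*} [TopologicalSpace X] [T2Space X]
    [MeasurableSpace X] [OpensMeasurableSpace X] (μ : Measure X) [IsFiniteMeasure μ]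
    [μ.InnerRegularCompactLTTop] {s : Set X} (hs : MeasurableSet s) {ε : ENNReal} (hε : ε ≠ 0) :
    ∃ K ⊆ s, IsCompact K ∧ μ Kᶜ ≤ μ sᶜ + ε := by
  obtain ⟨K, hKs, hK, hlt⟩ := hs.exists_isCompact_sdiff_lt (measure_ne_top μ s) hε
  refine ⟨K, hKs, hK, ?_⟩
  have : Kᶜ ⊆ sᶜ ∪ s \ K := fun x hx => by
    by_cases h : x ∈ s
    · exact Or.inr ⟨h, hx⟩
    · exact Or.inl h
  exact (measure_mono this).trans ((measure_union_le _ _).trans (add_le_add le_rfl hlt.le))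

lemma isOpen_setOf_measure_section_lt {X : Type*} [TopologicalSpace X] {O : Set (X × Angles)}
    (hO : IsOpen O) (q : ENNReal) : IsOpen {x | angleMeasure {y | (x, y) ∉ O} < q} := by
  refine isOpen_iff_mem_nhds.2 fun x hx => ?_
  have hsec : IsOpen {y : Angles | (x, y) ∈ O} := hO.preimage (by fun_prop)
  have hx' : angleMeasure {y : Angles | (x, y) ∈ O}ᶜ < q := hx
  obtain ⟨r, hr1, hr2⟩ := exists_between hx'
  obtain ⟨K, hKs, hK, hle⟩ := exists_isCompact_measure_compl_le angleMeasure hsec.measurableSet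
    (tsub_pos_of_lt hr1).ne'
  rw [add_tsub_cancel_of_le hr1.le] at hle
  obtain ⟨U, V, hU, -, hxU, hKV, hUV⟩ := generalized_tube_lemma (isCompact_singleton (x := x)) hK hO
    (by rintro ⟨x', y⟩ ⟨hx', hy⟩; obtain rfl : x' = x := hx'; exact hKs hy)
  refine mem_of_superset (hU.mem_nhds (hxU rfl)) fun x' hx'U => ?_
  refine lt_of_le_of_lt (measure_mono ?_) (hle.trans_lt hr2)
  exact fun y hy hyK => hy (hUV ⟨hx'U, hKV hyK⟩)

lemma isOpen_setOf_forall_closedBall_mem {X Y : Type*} [TopologicalSpace X] [TopologicalSpace Y]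
    {D : Set Y} (hD : IsOpen D) {f : X × ℂ → Y} (hf : Continuous f) :
    IsOpen {x | ∀ w ∈ closedBall (0 : ℂ) 1, f (x, w) ∈ D} := by
  refine isOpen_iff_mem_nhds.2 fun x hx => ?_
  obtain ⟨U, V, hU, -, hxU, hV, hUV⟩ := generalized_tube_lemma (isCompact_singleton (x := x))
    (isCompact_closedBall (0 : ℂ) 1) (hD.preimage hf)
    (by rintro ⟨x', y⟩ ⟨hx', hy⟩; obtain rfl : x' = x := hx'; exact hx y hy)
  exact mem_of_superset (hU.mem_nhds (hxU rfl)) fun x' hx'U w hw => hUV ⟨hx'U, hV hw⟩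

/-- Poletsky's gluing: discs attached at all points of the boundary of a disc are replaced by one
disc, the exceptional set having at most the average size of the exceptional sets of the attached
discs. -/
theorem exists_glued_disc {D : Set F} (hD : IsOpen D)
    {ψ : ℂ → F} (hψc : ContinuousOn ψ (closedBall 0 1)) (hψ : EntireApproximable ψ)
    (hψD : MapsTo ψ (closedBall 0 1) D) {W : Set (Angles × F)} (hW : IsOpen W)
    {b : Angles → ENNReal} (hb : Measurable b)
    (h : ∀ x, ∃ φ : ℂ → F, Differentiable ℂ φ ∧ φ 0 = 0 ∧
      (∀ w ∈ closedBall (0 : ℂ) 1, ψ (circlePt x) + φ w ∈ D) ∧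
      angleMeasure {y | (x, ψ (circlePt x) + φ (circlePt y)) ∉ W} < b x)
    {ε : ENNReal} (hε : ε ≠ 0) :
    ∃ Φ : ℂ → F, Differentiable ℂ Φ ∧ Φ 0 = ψ 0 ∧ MapsTo Φ (closedBall 0 1) D ∧
      angleMeasure {x | (x, Φ (circlePt x)) ∉ W} ≤ ∫⁻ x, b x ∂angleMeasure + ε := by
  have hψcirc : Continuous fun x : Angles => ψ (circlePt x) :=
    hψc.comp_continuous continuous_circlePt circlePt_mem_closedBall
  have hcp := continuous_circlePt
  let ι := {φ : ℂ → F // Differentiable ℂ φ ∧ φ 0 = 0}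
  have hιc : ∀ φ : ι, Continuous φ.1 := fun φ => φ.2.1.continuous
  let A : ι → Set Angles := fun φ => {x | ∀ w ∈ closedBall (0 : ℂ) 1, ψ (circlePt x) + φ.1 w ∈ D}
  have hA : ∀ φ, IsOpen (A φ) := fun φ =>
    isOpen_setOf_forall_closedBall_mem hD (f := fun p : Angles × ℂ => ψ (circlePt p.1) + φ.1 p.2)
      ((hψcirc.comp continuous_fst).add ((hιc φ).comp continuous_snd))
  let bad : ι → Angles → ENNReal := fun φ x =>
    angleMeasure {y | (x, ψ (circlePt x) + φ.1 (circlePt y)) ∉ W}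
  have hbad : ∀ φ q, IsOpen {x | bad φ x < q} := fun φ q =>
    isOpen_setOf_measure_section_lt (O := {p : Angles × Angles |
      (p.1, ψ (circlePt p.1) + φ.1 (circlePt p.2)) ∈ W})
      (hW.preimage (continuous_fst.prodMk ((hψcirc.comp continuous_fst).add
        ((hιc φ).comp (hcp.comp continuous_snd))))) q
  let O : ℚ → ι → Set Angles := fun q φ => A φ ∩ {x | bad φ x < ((q : ℝ).toNNReal : ENNReal)}
  have hO : ∀ q φ, IsOpen (O q φ) := fun q φ => (hA φ).inter (hbad φ _)
  choose T hTc hTU using fun q => TopologicalSpace.isOpen_iUnion_countable (O q) (hO q)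
  let S : ℚ × ι → Set Angles := fun p => O p.1 p.2 ∩ {x | ((p.1 : ℝ).toNNReal : ENNReal) < b x}
  have hSm : ∀ p, MeasurableSet (S p) := fun p =>
    (hO _ _).measurableSet.inter (measurableSet_lt measurable_const hb)
  let P : Set (ℚ × ι) := ⋃ q : ℚ, Prod.mk q '' T q
  have hPc : P.Countable := countable_iUnion fun q => (hTc q).image _
  have hPcov : ∀ x, ∃ p ∈ P, x ∈ S p := by
    intro x
    obtain ⟨φ, hφ, hφ0, hφD, hφb⟩ := h x
    obtain ⟨q, -, hq1, hq2⟩ := ENNReal.lt_iff_exists_rat_btwn.1 hφb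
    have hx : x ∈ ⋃ φ, O q φ := mem_iUnion.2 ⟨⟨φ, hφ, hφ0⟩, hφD, hq1⟩
    rw [← hTU q] at hx
    obtain ⟨φ', hφ', hx'⟩ := mem_iUnion₂.1 hx
    exact ⟨(q, φ'), mem_iUnion.2 ⟨q, φ', hφ', rfl⟩, hx', hq2⟩
  obtain ⟨f, hf⟩ := hPc.exists_eq_range (by obtain ⟨p, hp, -⟩ := hPcov 0; exact ⟨p, hp⟩)
  let S' : ℕ → Set Angles := disjointed fun n => S (f n)
  have hS'm : ∀ n, MeasurableSet (S' n) := MeasurableSet.disjointed fun n => hSm _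
  have hS'sub : ∀ n, S' n ⊆ S (f n) := disjointed_subset _
  have hS'U : ⋃ n, S' n = univ := by
    rw [iUnion_disjointed, eq_univ_iff_forall]
    intro x
    obtain ⟨p, hp, hx⟩ := hPcov x
    rw [hf] at hp
    obtain ⟨n, rfl⟩ := hp
    exact mem_iUnion.2 ⟨n, hx⟩
  obtain ⟨ε', hε', hε'ε⟩ : ∃ ε' : ENNReal, ε' ≠ 0 ∧ ε' + ε' + ε' ≤ ε := by
    refine ⟨ε / 3, (ENNReal.div_pos hε (by simp)).ne', le_of_eq ?_⟩
    rw [← ENNReal.add_thirds ε]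
    simp
  have htend := tendsto_measure_iUnion_accumulate (μ := angleMeasure) (f := S')
  rw [hS'U, measure_univ] at htend
  obtain ⟨M, hM⟩ : ∃ M, 1 < angleMeasure (accumulate S' M) + ε' := by
    have h1 : Tendsto (fun n => angleMeasure (accumulate S' n) + ε') atTop (𝓝 (1 + ε')) :=
      htend.add_const _
    exact (h1.eventually_const_lt (ENNReal.lt_add_right ENNReal.one_ne_top hε')).exists
  have hMacc : MeasurableSet (accumulate S' M) :=
    MeasurableSet.biUnion (to_countable _) fun n _ => hS'm n
  have hMc : angleMeasure (accumulate S' M)ᶜ ≤ ε' := by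
    rw [prob_compl_eq_one_sub hMacc]
    exact tsub_le_iff_left.2 hM.le
  let J := Fin (M + 1)
  have hδ : ε' / (M + 1 : ℕ) ≠ 0 := (ENNReal.div_pos hε' (by simp)).ne'
  choose K hKs hK hKlt using fun j : J =>
    (hS'm j).exists_isCompact_sdiff_lt (measure_ne_top angleMeasure _) hδ
  have hL : angleMeasure (⋃ j, K j)ᶜ ≤ ε' + ε' := by
    have : (⋃ j, K j)ᶜ ⊆ (accumulate S' M)ᶜ ∪ ⋃ j : J, S' j \ K j := by
      intro x hx
      by_cases hxa : x ∈ accumulate S' M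
      · obtain ⟨n, hn, hxn⟩ := mem_iUnion₂.1 hxa
        have hn' : n ≤ M := hn
        refine Or.inr (mem_iUnion.2 ⟨⟨n, by omega⟩, hxn, fun hxK => hx (mem_iUnion.2 ⟨_, hxK⟩)⟩)
      · exact Or.inl hxa
    refine (measure_mono this).trans ((measure_union_le _ _).trans (add_le_add hMc ?_))
    refine (measure_iUnion_le _).trans ?_
    rw [tsum_fintype]
    refine (Finset.sum_le_sum fun j _ => (hKlt j).le).trans ?_
    rw [Finset.sum_const, Finset.card_univ, Fintype.card_fin, nsmul_eq_mul]
    exact ENNReal.mul_div_le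
  let Aj : J → ι := fun j => (f j).2
  have hKA : ∀ j, K j ⊆ A (Aj j) := fun j x hx => (hS'sub j (hKs j hx)).1.1
  have hKbad : ∀ j, ∀ x ∈ K j, bad (Aj j) x ≤ b x := fun j x hx =>
    ((hS'sub j (hKs j hx)).1.2.trans (hS'sub j (hKs j hx)).2).le
  have hKdisj : ∀ i j, i ≠ j → Disjoint (K i) (K j) := fun i j hij =>
    (disjoint_disjointed (fun n => S (f n)) (fun hne => hij (Fin.ext hne))).mono (hKs i) (hKs j)
  obtain ⟨r, hr, hrA, hrd⟩ : ∃ r : ℝ, 0 < r ∧ (∀ j, thickening r (K j) ⊆ A (Aj j)) ∧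
      ∀ i j, i ≠ j → Disjoint (thickening r (K i)) (thickening r (K j)) := by
    have e1 : ∀ᶠ r : ℝ in 𝓝[>] 0, ∀ j, thickening r (K j) ⊆ A (Aj j) := by
      refine eventually_all.2 fun j => ?_
      obtain ⟨δ, hδ, hδA⟩ := (hK j).exists_thickening_subset_open (hA _) (hKA j)
      filter_upwards [Ioo_mem_nhdsGT hδ] with r hr
      exact (thickening_mono hr.2.le _).trans hδA
    have e2 : ∀ᶠ r : ℝ in 𝓝[>] 0, ∀ i j, i ≠ j →
        Disjoint (thickening r (K i)) (thickening r (K j)) := by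
      refine eventually_all.2 fun i => eventually_all.2 fun j => ?_
      by_cases hij : i = j
      · exact Eventually.of_forall fun r hne => absurd hij hne
      obtain ⟨δ, hδ, hd⟩ := (hKdisj i j hij).exists_thickenings (hK i) (hK j).isClosed
      filter_upwards [Ioo_mem_nhdsGT hδ] with r hr _
      exact hd.mono (thickening_mono hr.2.le _) (thickening_mono hr.2.le _)
    obtain ⟨r, ⟨h1, h2⟩, h3⟩ := ((e1.and e2).and self_mem_nhdsWithin).exists
    exact ⟨r, h3, h1, h2⟩
  let χ : J → C(Angles, ℂ) := fun j =>
    ⟨fun x => (((thickenedIndicator hr (K j) x : NNReal) : ℝ) : ℂ), by fun_prop⟩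
  have hχ0 : ∀ j x, x ∉ thickening r (K j) → χ j x = 0 := fun j x hx => by
    change (((thickenedIndicator hr (K j) x : NNReal) : ℝ) : ℂ) = 0
    rw [thickenedIndicator_zero hr (K j) hx]
    simp
  have hχ1 : ∀ j, ∀ x ∈ K j, χ j x = 1 := fun j x hx => by
    change (((thickenedIndicator hr (K j) x : NNReal) : ℝ) : ℂ) = 1
    rw [thickenedIndicator_one hr (K j) hx]
    simp
  have hχle : ∀ j x, ‖χ j x‖ ≤ 1 := fun j x => by
    have : ‖χ j x‖ = thickenedIndicator hr (K j) x := by simp [χ]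
    rw [this]
    exact_mod_cast thickenedIndicator_le_one hr (K j) x
  let φ : J → ℂ → F := fun j => (Aj j).1
  have hφ0 : ∀ j, φ j 0 = 0 := fun j => (Aj j).2.2
  have hsum : ∀ i x, x ∈ thickening r (K i) → ∀ w,
      ∑ j, φ j (χ j x * w) = φ i (χ i x * w) := by
    intro i x hx w
    refine Finset.sum_eq_single_of_mem i (Finset.mem_univ _) fun j _ hji => ?_
    rw [hχ0 j x fun hxj => (hrd i j hji.symm).le_bot ⟨hx, hxj⟩, zero_mul, hφ0]
  have hGD : ∀ x, ∀ w ∈ closedBall (0 : ℂ) 1, ψ (circlePt x) + ∑ j, φ j (χ j x * w) ∈ D := by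
    intro x w hw
    by_cases hx : ∃ i, x ∈ thickening r (K i)
    · obtain ⟨i, hi⟩ := hx
      rw [hsum i x hi]
      refine hrA i hi _ ?_
      rw [mem_closedBall_zero_iff] at hw ⊢
      rw [norm_mul]
      exact mul_le_one₀ (hχle i x) (norm_nonneg _) hw
    · push Not at hx
      rw [Finset.sum_eq_zero fun j _ => by rw [hχ0 j x (hx j), zero_mul, hφ0], add_zero]
      exact hψD (circlePt_mem_closedBall x)
  let G : Angles × Angles → Angles × F := fun p =>
    (p.1, ψ (circlePt p.1) + ∑ j, φ j (χ j p.1 * circlePt p.2))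
  have hG : Continuous G := by
    refine continuous_fst.prodMk ((hψcirc.comp continuous_fst).add
      (continuous_finsetSum _ fun j _ => (hιc (Aj j)).comp ?_))
    exact (((χ j).continuous).comp continuous_fst).mul (hcp.comp continuous_snd)
  have hOst : IsOpen (G ⁻¹' W) := hW.preimage hG
  have hOstm : (angleMeasure.prod angleMeasure) (G ⁻¹' W)ᶜ ≤
      ∫⁻ x, b x ∂angleMeasure + (ε' + ε') := by
    rw [Measure.prod_apply hOst.measurableSet.compl]
    have hLm : MeasurableSet (⋃ j, K j)ᶜ :=
      (MeasurableSet.iUnion fun j => (hK j).measurableSet).compl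
    calc ∫⁻ x, angleMeasure (Prod.mk x ⁻¹' (G ⁻¹' W)ᶜ) ∂angleMeasure
        ≤ ∫⁻ x, (b x + (⋃ j, K j)ᶜ.indicator 1 x) ∂angleMeasure := by
          refine lintegral_mono fun x => ?_
          by_cases hx : x ∈ ⋃ j, K j
          · obtain ⟨i, hi⟩ := mem_iUnion.1 hx
            refine le_trans (le_of_eq ?_) ((hKbad i x hi).trans le_self_add)
            simp only [bad]
            congr 1
            ext y
            simp only [G, mem_preimage, mem_compl_iff, mem_ofPred_eq]
            rw [hsum i x (self_subset_thickening hr _ hi), hχ1 i x hi, one_mul]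
          · rw [indicator_of_mem (show x ∈ (⋃ j, K j)ᶜ from hx), Pi.one_apply]
            exact prob_le_one.trans le_add_self
      _ = ∫⁻ x, b x ∂angleMeasure + angleMeasure (⋃ j, K j)ᶜ := by
          rw [lintegral_add_left hb, lintegral_indicator_one hLm]
      _ ≤ _ := add_le_add le_rfl hL
  obtain ⟨Q, hQs, hQ, hQm⟩ := exists_isCompact_measure_compl_le (angleMeasure.prod angleMeasure)
    hOst.measurableSet hε'
  obtain ⟨η, hη, hηW⟩ := (hQ.image hG).exists_thickening_subset_open hW (by
    rintro _ ⟨p, hp, rfl⟩; exact hQs hp)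
  obtain ⟨N, hN⟩ := exists_entire_near_perturbation hD hψc hψ hψD φ (fun j => (Aj j).2.1) hφ0 χ hGD
    hη
  obtain ⟨t, ht⟩ := exists_shear_measure_le N hQ.measurableSet.compl
  obtain ⟨Φ, hΦ, hΦ0, hΦD, hΦG⟩ := hN (circlePt t) (norm_circlePt t)
  refine ⟨Φ, hΦ, hΦ0, hΦD, ?_⟩
  have hsub : {x | (x, Φ (circlePt x)) ∉ W} ⊆ {x | (x, N • x + t) ∈ Qᶜ} := by
    intro x hx hxQ
    refine hx (hηW (mem_thickening_iff.2 ⟨_, ⟨_, hxQ, rfl⟩, ?_⟩))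
    have := hΦG x
    rw [← circlePt_nsmul, mul_comm (circlePt t), ← circlePt_add] at this
    rw [Prod.dist_eq, max_lt_iff]
    exact ⟨by simpa [G] using hη, by rw [dist_eq_norm]; exact this⟩
  calc _ ≤ _ := measure_mono hsub
    _ ≤ _ := ht
    _ ≤ _ := hQm
    _ ≤ ∫⁻ x, b x ∂angleMeasure + (ε' + ε') + ε' := by gcongr
    _ ≤ _ := by rw [add_assoc]; gcongr

/-- The infimum, over the entire discs centered at `z` with closed unit disc mapped to `D`, of the
measure of the set of boundary angles sent outside `V`. -/
def discMeasure (V D : Set F) (z : F) : ENNReal :=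
  ⨅ (φ : ℂ → F) (_ : Differentiable ℂ φ ∧ φ 0 = 0 ∧ ∀ w ∈ closedBall (0 : ℂ) 1, z + φ w ∈ D),
    angleMeasure {y | z + φ (circlePt y) ∉ V}

lemma discMeasure_lt_iff {V D : Set F} {z : F} {q : ENNReal} :
    discMeasure V D z < q ↔ ∃ φ : ℂ → F, (Differentiable ℂ φ ∧ φ 0 = 0 ∧
      ∀ w ∈ closedBall (0 : ℂ) 1, z + φ w ∈ D) ∧ angleMeasure {y | z + φ (circlePt y) ∉ V} < q := by
  simp only [discMeasure, iInf_lt_iff, exists_prop]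

lemma discMeasure_le {V D : Set F} {z : F} {φ : ℂ → F} (hφ : Differentiable ℂ φ) (hφ0 : φ 0 = 0)
    (hφD : ∀ w ∈ closedBall (0 : ℂ) 1, z + φ w ∈ D) :
    discMeasure V D z ≤ angleMeasure {y | z + φ (circlePt y) ∉ V} :=
  iInf₂_le φ ⟨hφ, hφ0, hφD⟩

lemma discMeasure_le_one {V D : Set F} {z : F} (hz : z ∈ D) : discMeasure V D z ≤ 1 :=
  (discMeasure_le (φ := fun _ => 0) (differentiable_const _) rfl (by simpa using fun _ _ => hz)).trans
    prob_le_one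

lemma discMeasure_eq_zero {V D : Set F} {z : F} (hz : z ∈ D) (hzV : z ∈ V) :
    discMeasure V D z = 0 := by
  have := discMeasure_le (V := V) (D := D) (z := z) (φ := fun _ => 0) (differentiable_const _) rfl
    (by simpa using fun _ _ => hz)
  simpa [hzV] using this

lemma isOpen_setOf_discMeasure_lt {V D : Set F} (hV : IsOpen V) (hD : IsOpen D) (q : ENNReal) :
    IsOpen {z | discMeasure V D z < q} := by
  have : {z | discMeasure V D z < q} = ⋃ (φ : ℂ → F) (_ : Differentiable ℂ φ ∧ φ 0 = 0),
      ({z | ∀ w ∈ closedBall (0 : ℂ) 1, z + φ w ∈ D} ∩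
        {z | angleMeasure {y | z + φ (circlePt y) ∉ V} < q}) := by
    ext z
    simp only [discMeasure_lt_iff, mem_iUnion, mem_inter_iff, mem_ofPred_eq]
    constructor
    · rintro ⟨φ, ⟨h1, h2, h3⟩, h4⟩
      exact ⟨φ, ⟨h1, h2⟩, h3, h4⟩
    · rintro ⟨φ, ⟨h1, h2⟩, h3, h4⟩
      exact ⟨φ, ⟨h1, h2, h3⟩, h4⟩
  rw [this]
  refine isOpen_iUnion fun φ => isOpen_iUnion fun hφ => ?_
  have hφc := hφ.1.continuous
  have hcp := continuous_circlePt
  exact (isOpen_setOf_forall_closedBall_mem hD (f := fun p : F × ℂ => p.1 + φ p.2)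
    (by fun_prop)).inter (isOpen_setOf_measure_section_lt
      (O := {p : F × Angles | p.1 + φ (circlePt p.2) ∈ V}) (hV.preimage (by fun_prop)) q)

/-- Poletsky's theorem: the disc functional satisfies the sub-mean value inequality along discs. -/
theorem discMeasure_le_lintegral {V D : Set F} (hV : IsOpen V) (hD : IsOpen D) {ψ : ℂ → F}
    (hψc : ContinuousOn ψ (closedBall 0 1)) (hψ : EntireApproximable ψ)
    (hψD : MapsTo ψ (closedBall 0 1) D) :
    Measurable (fun x => discMeasure V D (ψ (circlePt x))) ∧
    discMeasure V D (ψ 0) ≤ ∫⁻ x, discMeasure V D (ψ (circlePt x)) ∂angleMeasure := by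
  have hψcirc : Continuous fun x : Angles => ψ (circlePt x) :=
    hψc.comp_continuous continuous_circlePt circlePt_mem_closedBall
  have hmeas : Measurable fun x => discMeasure V D (ψ (circlePt x)) :=
    measurable_of_Iio fun q =>
      ((isOpen_setOf_discMeasure_lt hV hD q).preimage hψcirc).measurableSet
  refine ⟨hmeas, ENNReal.le_of_forall_pos_le_add fun ε hε _ => ?_⟩
  have hε2 : (ε : ENNReal) / 2 ≠ 0 := (ENNReal.div_pos (by exact_mod_cast hε.ne') (by simp)).ne'
  obtain ⟨Φ, hΦ, hΦ0, hΦD, hΦm⟩ := exists_glued_disc hD hψc hψ hψD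
    (W := univ ×ˢ V) (isOpen_univ.prod hV)
    (b := fun x => discMeasure V D (ψ (circlePt x)) + ε / 2) (hmeas.add_const _) (fun x => by
      have hx : discMeasure V D (ψ (circlePt x)) < discMeasure V D (ψ (circlePt x)) + ε / 2 :=
        ENNReal.lt_add_right (ne_top_of_le_ne_top ENNReal.one_ne_top
          (discMeasure_le_one (hψD (circlePt_mem_closedBall x)))) hε2
      obtain ⟨φ, ⟨h1, h2, h3⟩, h4⟩ := discMeasure_lt_iff.1 hx
      exact ⟨φ, h1, h2, h3, by simpa using h4⟩) hε2
  rw [lintegral_add_right _ measurable_const, lintegral_const, measure_univ, mul_one, add_assoc,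
    ENNReal.add_halves] at hΦm
  refine le_trans ?_ hΦm
  have := discMeasure_le (V := V) (D := D) (z := ψ 0) (φ := fun w => Φ w - ψ 0) (hΦ.sub_const _)
    (by simp [hΦ0]) (fun w hw => by simpa using hΦD hw)
  simpa using this

lemma pshOnM_discMeasure [CompleteSpace F] {V D : Set F} (hV : IsOpen V) (hD : IsOpen D) :
    PSHOnM (H := F) (fun z => (discMeasure V D z).toReal) D := by
  have hfin : ∀ z ∈ D, discMeasure V D z ≠ ⊤ := fun z hz =>
    ne_top_of_le_ne_top ENNReal.one_ne_top (discMeasure_le_one hz)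
  constructor
  · intro z hz q hq
    have hq0 : 0 < q := ENNReal.toReal_nonneg.trans_lt hq
    have hz' : discMeasure V D z < ENNReal.ofReal q :=
      (ENNReal.lt_ofReal_iff_toReal_lt (hfin z hz)).2 hq
    filter_upwards [mem_nhdsWithin_of_mem_nhds
      ((isOpen_setOf_discMeasure_lt hV hD _).mem_nhds hz')] with w hw
    exact ENNReal.toReal_lt_of_lt_ofReal hw
  · intro φ U hU hφ z r hr hsub hmem
    rw [mdifferentiableOn_iff_differentiableOn] at hφ
    set ψ : ℂ → F := fun w => φ (z + r * w) with hψ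
    have hcont : Continuous fun w : ℂ => z + r * w := by fun_prop
    have hmaps : ∀ w ∈ closedBall (0 : ℂ) 1, z + r * w ∈ closedBall z r := by
      intro w hw
      rw [mem_closedBall_zero_iff] at hw
      rw [mem_closedBall_iff_norm, add_sub_cancel_left, norm_mul, Complex.norm_real,
        Real.norm_of_nonneg hr.le]
      exact mul_le_of_le_one_right hr.le hw
    have hψU : DifferentiableOn ℂ ψ ((fun w : ℂ => z + r * w) ⁻¹' U) :=
      hφ.comp (by fun_prop) fun w hw => hw
    have hUo := hU.preimage hcont
    have hcU : closedBall (0 : ℂ) 1 ⊆ (fun w : ℂ => z + r * w) ⁻¹' U :=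
      fun w hw => hsub (hmaps w hw)
    obtain ⟨hm, hle⟩ := discMeasure_le_lintegral hV hD (hψU.continuousOn.mono hcU)
      (EntireApproximable.of_differentiableOn hUo hψU hcU) (fun w hw => hmem _ (hmaps w hw))
    have h1 := ENNReal.toReal_mono (by
      refine ne_top_of_le_ne_top ENNReal.one_ne_top ((lintegral_mono fun x =>
        discMeasure_le_one (hmem _ (hmaps _ (circlePt_mem_closedBall x)))).trans ?_)
      simp) hle
    rw [← integral_toReal hm.aemeasurable (ae_of_all _ fun x => lt_of_le_of_lt
        (discMeasure_le_one (hmem _ (hmaps _ (circlePt_mem_closedBall x)))) ENNReal.one_lt_top),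
      AddCircle.integral_haarAddCircle, ← AddCircle.intervalIntegral_preimage (2 * π) 0,
      zero_add, smul_eq_mul] at h1
    simpa [hψ, circlePt_coe] using h1

section Extremal

variable {𝒜 : ApproachData F} {A D V : Set F}

lemma alimsup_nonpos {X : Type*} [TopologicalSpace X] {𝒜 : ApproachData X} {u : X → ℝ} {a : X}
    (h : ∀ R ∈ 𝒜.regions a, ∀ᶠ z in 𝓝[R] a, u z = 0) : ALimsup 𝒜 u a ≤ 0 := by
  refine Real.sSup_nonpos ?_
  rintro _ ⟨R, hR, rfl⟩
  dsimp only
  rw [limsup_eq]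
  rcases eq_or_neBot (𝓝[R] a) with hbot | hne
  · simp [hbot]
  · refine csInf_le ⟨0, fun x hx => ?_⟩ ((h R hR).mono fun z hz => hz.le)
    obtain ⟨z, h1, h2⟩ := ((h R hR).and hx).exists
    rwa [h1] at h2

lemma bddAbove_hFunA {z : F} (hz : z ∈ D) : BddAbove ((fun u : F → ℝ => u z) ''
    {u | PSHOnM (H := F) u D ∧ (∀ x ∈ D, u x ≤ 1) ∧ ∀ a ∈ A, ALimsup 𝒜 u a ≤ 0}) :=
  ⟨1, by rintro _ ⟨u, hu, rfl⟩; exact hu.2.1 z hz⟩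

lemma pshOnM_zero : PSHOnM (H := F) (fun _ : F => (0 : ℝ)) D :=
  ⟨upperSemicontinuous_const.upperSemicontinuousOn _, fun _ _ _ _ _ _ _ _ _ => by simp⟩

lemma zero_mem_competitors : (fun _ : F => (0 : ℝ)) ∈
    {u | PSHOnM (H := F) u D ∧ (∀ x ∈ D, u x ≤ 1) ∧ ∀ a ∈ A, ALimsup 𝒜 u a ≤ 0} :=
  ⟨pshOnM_zero, fun _ _ => zero_le_one, fun _ _ =>
    alimsup_nonpos fun _ _ => Eventually.of_forall fun _ => rfl⟩

lemma hFunA_nonneg {z : F} (hz : z ∈ D) : 0 ≤ hFunA (H := F) 𝒜 A D z :=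
  le_csSup (bddAbove_hFunA hz) ⟨_, zero_mem_competitors, rfl⟩

lemma hFunA_le_one {z : F} (hz : z ∈ D) : hFunA (H := F) 𝒜 A D z ≤ 1 :=
  csSup_le ⟨_, _, zero_mem_competitors, rfl⟩ (by rintro _ ⟨u, hu, rfl⟩; exact hu.2.1 z hz)

lemma discMeasure_le_hFunA [CompleteSpace F] (hD : IsOpen D) (hV : IsOpen V)
    (h : ∀ a ∈ A, ∀ R ∈ 𝒜.regions a, ∀ᶠ z in 𝓝[R] a, z ∈ V ∧ z ∈ D) {z : F} (hz : z ∈ D) :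
    (discMeasure V D z).toReal ≤ hFunA (H := F) 𝒜 A D z := by
  refine le_csSup (bddAbove_hFunA hz) ⟨_, ⟨pshOnM_discMeasure hV hD, fun x hx => ?_, fun a ha =>
    alimsup_nonpos fun R hR => (h a ha R hR).mono fun w hw => ?_⟩, rfl⟩
  · exact ENNReal.toReal_le_of_le_ofReal zero_le_one (by simpa using discMeasure_le_one hx)
  · simp [discMeasure_eq_zero hw.2 hw.1]

lemma bddAbove_limsup_hFunA {a : F} (h𝒜 : ∀ R ∈ 𝒜.regions a, R ⊆ D) :
    BddAbove ((fun R : Set F => limsup (hFunA (H := F) 𝒜 A D) (𝓝[R] a)) '' 𝒜.regions a) := by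
  refine ⟨1, ?_⟩
  rintro _ ⟨R, hR, rfl⟩
  dsimp only
  rw [limsup_eq]
  rcases eq_or_neBot (𝓝[R] a) with hbot | hne
  · simp [hbot]
  · refine csInf_le ⟨0, fun x hx => ?_⟩ ?_
    · have hx : ∀ᶠ z in 𝓝[R] a, hFunA (H := F) 𝒜 A D z ≤ x := hx
      obtain ⟨z, h1, h2⟩ := (hx.and self_mem_nhdsWithin).exists
      exact (hFunA_nonneg (h𝒜 R hR h2)).trans h1
    · filter_upwards [self_mem_nhdsWithin] with z hz
      exact hFunA_le_one (h𝒜 R hR hz)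

lemma eventually_hFunA_lt {a : F} (h𝒜 : ∀ R ∈ 𝒜.regions a, R ⊆ D)
    (ha : omegaA (H := F) 𝒜 A D a = 0) {R : Set F} (hR : R ∈ 𝒜.regions a) {δ : ℝ} (hδ : 0 < δ) :
    ∀ᶠ z in 𝓝[R] a, hFunA (H := F) 𝒜 A D z < δ := by
  have h1 : limsup (hFunA (H := F) 𝒜 A D) (𝓝[R] a) < δ :=
    (le_csSup (bddAbove_limsup_hFunA h𝒜) ⟨R, hR, rfl⟩).trans_lt (ha.trans_lt hδ)
  rw [limsup_eq] at h1
  obtain ⟨x, hx, hxδ⟩ := exists_lt_of_csInf_lt ⟨1, by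
    filter_upwards [self_mem_nhdsWithin] with z hz
    exact hFunA_le_one (h𝒜 R hR hz)⟩ h1
  have hx : ∀ᶠ z in 𝓝[R] a, hFunA (H := F) 𝒜 A D z ≤ x := hx
  exact hx.mono fun z hz => hz.trans_lt hxδ

lemma hFunA_le_omegaA {z : F} (h𝒜 : ∀ R ∈ 𝒜.regions z, R ⊆ D)
    (hz : ∃ R ∈ 𝒜.regions z, z ∈ R) : hFunA (H := F) 𝒜 A D z ≤ omegaA (H := F) 𝒜 A D z := by
  obtain ⟨R, hR, hzR⟩ := hz
  refine le_trans ?_ (le_csSup (bddAbove_limsup_hFunA h𝒜) ⟨R, hR, rfl⟩)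
  dsimp only
  rw [limsup_eq]
  refine le_csInf ⟨1, ?_⟩ fun x hx => ?_
  · filter_upwards [self_mem_nhdsWithin] with w hw
    exact hFunA_le_one (h𝒜 R hR hw)
  · have hx : ∀ᶠ w in 𝓝[R] z, hFunA (H := F) 𝒜 A D w ≤ x := hx
    exact hx.self_of_nhdsWithin hzR

/-- The points near `A` where the extremal function localized at some point of `A` is small. -/
def smallExtremalSet (𝒜 : ApproachData F) (A D : Set F) (δ : ℝ) : Set F :=
  ⋃ a ∈ A, interior {z | z ∈ D ∩ ball a δ ∧
    hFunA (H := F) (𝒜.restrict (ball a δ)) (A ∩ ball a δ) (D ∩ ball a δ) z < δ}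

lemma isOpen_smallExtremalSet (δ : ℝ) : IsOpen (smallExtremalSet 𝒜 A D δ) :=
  isOpen_biUnion fun _ _ => isOpen_interior

lemma exists_dist_lt_of_mem_smallExtremalSet {δ : ℝ} {z : F}
    (hz : z ∈ smallExtremalSet 𝒜 A D δ) : ∃ a ∈ A, dist z a < δ := by
  obtain ⟨a, ha, hz⟩ := mem_iUnion₂.1 hz
  exact ⟨a, ha, (interior_subset hz).1.2⟩

lemma eventually_mem_smallExtremalSet (h𝒜 : ∀ ζ, ∀ R ∈ 𝒜.regions ζ, IsOpen R ∧ R ⊆ D)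
    (hreg : ∀ a ∈ A, PlrgAtA (H := F) 𝒜 A D a) {δ : ℝ} (hδ : 0 < δ) {a : F} (ha : a ∈ A)
    {R : Set F} (hR : R ∈ 𝒜.regions a) :
    ∀ᶠ z in 𝓝[R] a, z ∈ smallExtremalSet 𝒜 A D δ := by
  have haU : a ∈ ball a δ := mem_ball_self hδ
  have h1 := eventually_hFunA_lt (𝒜 := 𝒜.restrict (ball a δ)) (A := A ∩ ball a δ)
    (D := D ∩ ball a δ) (a := a)
    (by rintro _ ⟨R', hR', rfl⟩; exact inter_subset_inter_left _ (h𝒜 a R' hR').2)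
    (hreg a ha (ball a δ) isOpen_ball haU) ⟨R, hR, rfl⟩ hδ
  obtain ⟨O, hO, haO, hOs⟩ := mem_nhdsWithin.1 h1
  filter_upwards [mem_nhdsWithin_of_mem_nhds (hO.mem_nhds haO),
    mem_nhdsWithin_of_mem_nhds (isOpen_ball.mem_nhds haU), self_mem_nhdsWithin] with z hzO hzU hzR
  refine mem_iUnion₂.2 ⟨a, ha, mem_interior.2
    ⟨O ∩ (R ∩ ball a δ), fun w hw => ?_, hO.inter ((h𝒜 a R hR).1.inter isOpen_ball),
      hzO, hzR, hzU⟩⟩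
  exact ⟨⟨(h𝒜 a R hR).2 hw.2.1, hw.2.2⟩, hOs hw⟩

lemma exists_disc_of_mem_smallExtremalSet [CompleteSpace F] (hD : IsOpen D)
    (h𝒜 : ∀ ζ, ∀ R ∈ 𝒜.regions ζ, IsOpen R ∧ R ⊆ D)
    (hreg : ∀ a ∈ A, PlrgAtA (H := F) 𝒜 A D a) {δ δ' : ℝ} (hδ' : 0 < δ') {z : F}
    (hz : z ∈ smallExtremalSet 𝒜 A D δ) :
    ∃ φ : ℂ → F, Differentiable ℂ φ ∧ φ 0 = 0 ∧
      (∀ w ∈ closedBall (0 : ℂ) 1, z + φ w ∈ D ∧ ‖φ w‖ < 2 * δ) ∧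
      angleMeasure {y | z + φ (circlePt y) ∉ smallExtremalSet 𝒜 A D δ'} < ENNReal.ofReal δ := by
  obtain ⟨a, ha, hz⟩ := mem_iUnion₂.1 hz
  obtain ⟨hzD, hzδ⟩ := interior_subset hz
  have hδ : 0 < δ := dist_nonneg.trans_lt hzD.2
  have h1 := discMeasure_le_hFunA (𝒜 := 𝒜.restrict (ball a δ)) (A := A ∩ ball a δ)
    (D := D ∩ ball a δ) (V := smallExtremalSet 𝒜 A D δ') (hD.inter isOpen_ball)
    (isOpen_smallExtremalSet δ') (by
      rintro a' ⟨ha', ha'U⟩ _ ⟨R, hR, rfl⟩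
      filter_upwards [self_mem_nhdsWithin, nhdsWithin_mono _ inter_subset_left
        (eventually_mem_smallExtremalSet h𝒜 hreg hδ' ha' hR)] with w hw hwV
      exact ⟨hwV, (h𝒜 a' R hR).2 hw.1, hw.2⟩) hzD
  have h2 := (ENNReal.lt_ofReal_iff_toReal_lt (ne_top_of_le_ne_top ENNReal.one_ne_top
    (discMeasure_le_one hzD))).2 (h1.trans_lt hzδ)
  obtain ⟨φ, ⟨hφ, hφ0, hφD⟩, hm⟩ := discMeasure_lt_iff.1 h2
  refine ⟨φ, hφ, hφ0, fun w hw => ⟨(hφD w hw).1, ?_⟩, hm⟩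
  have h3 : dist (z + φ w) a < δ := (hφD w hw).2
  have h4 : dist z a < δ := hzD.2
  have h5 : ‖φ w‖ ≤ dist (z + φ w) a + dist z a := by
    have := dist_triangle_right (z + φ w) z a
    rwa [dist_self_add_left] at this
  linarith

end Extremal

section Iteration

variable {D : Set F}

/-- A disc sent by `C` into `V` can be moved to a disc sent by most of `C` into `V'`, if every
point of `V` is the centre of a small disc in `D` whose boundary lies mostly in `V'`. -/
lemma exists_disc_step (hD : IsOpen D) {V V' : Set F} (hV' : IsOpen V') {δ : ℝ} (hδ : 0 < δ)
    (hstep : ∀ z ∈ V, ∃ φ : ℂ → F, Differentiable ℂ φ ∧ φ 0 = 0 ∧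
      (∀ w ∈ closedBall (0 : ℂ) 1, z + φ w ∈ D ∧ ‖φ w‖ < 2 * δ) ∧
      angleMeasure {y | z + φ (circlePt y) ∉ V'} < ENNReal.ofReal δ)
    {ψ : ℂ → F} (hψ : Differentiable ℂ ψ) (hψD : MapsTo ψ (closedBall 0 1) D)
    {C : Set Angles} (hC : IsClosed C) (hCV : ∀ x ∈ C, ψ (circlePt x) ∈ V) :
    ∃ Φ : ℂ → F, ∃ C' ⊆ C, Differentiable ℂ Φ ∧ Φ 0 = ψ 0 ∧ MapsTo Φ (closedBall 0 1) D ∧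
      IsClosed C' ∧ (∀ x ∈ C', Φ (circlePt x) ∈ V') ∧
      angleMeasure C'ᶜ ≤ angleMeasure Cᶜ + 3 * ENNReal.ofReal δ ∧
      angleMeasure {x | 2 * δ ≤ ‖Φ (circlePt x) - ψ (circlePt x)‖} ≤ 2 * ENNReal.ofReal δ := by
  have hδ0 : ENNReal.ofReal δ ≠ 0 := by simpa using hδ
  have hψc : Continuous fun x => ψ (circlePt x) := hψ.continuous.comp continuous_circlePt
  set W : Set (Angles × F) :=
    {p | ‖p.2 - ψ (circlePt p.1)‖ < 2 * δ} ∩ (Prod.fst ⁻¹' Cᶜ ∪ Prod.snd ⁻¹' V') with hWdef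
  have hW : IsOpen W :=
    (isOpen_lt (continuous_snd.sub (hψc.comp continuous_fst)).norm continuous_const).inter
      ((hC.isOpen_compl.preimage continuous_fst).union (hV'.preimage continuous_snd))
  obtain ⟨Φ, hΦ, hΦ0, hΦD, hm⟩ := exists_glued_disc hD hψ.continuous.continuousOn
    hψ.entireApproximable hψD hW (b := fun _ => ENNReal.ofReal δ) measurable_const (fun x => by
      by_cases hx : x ∈ C
      · obtain ⟨φ, hφ, hφ0, hφD, hφm⟩ := hstep _ (hCV x hx)
        refine ⟨φ, hφ, hφ0, fun w hw => (hφD w hw).1, lt_of_le_of_lt (measure_mono ?_) hφm⟩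
        intro y hy hyV
        exact hy ⟨by simpa using (hφD _ (circlePt_mem_closedBall y)).2, Or.inr hyV⟩
      · refine ⟨0, differentiable_const _, rfl, fun w _ => ?_, ?_⟩
        · simpa using hψD (circlePt_mem_closedBall x)
        · have : {y | (x, ψ (circlePt x) + (0 : ℂ → F) (circlePt y)) ∉ W} = ∅ := by
            refine eq_empty_of_forall_notMem fun y hy => hy ⟨?_, Or.inl hx⟩
            simpa using hδ
          rw [this]
          simpa using hδ) hδ0
  have hm' : angleMeasure {x | (x, Φ (circlePt x)) ∉ W} ≤ 2 * ENNReal.ofReal δ := by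
    simpa [two_mul] using hm
  have hS : IsOpen {x | (x, Φ (circlePt x)) ∈ W} :=
    hW.preimage (continuous_id.prodMk (hΦ.continuous.comp continuous_circlePt))
  obtain ⟨C', hC'S, hC', hC'm⟩ := exists_isCompact_measure_compl_le angleMeasure
    (hC.measurableSet.inter hS.measurableSet) hδ0
  refine ⟨Φ, C', fun x hx => (hC'S hx).1, hΦ, hΦ0, hΦD, hC'.isClosed, fun x hx => ?_, ?_, ?_⟩
  · exact (hC'S hx).2.2.resolve_left fun h => h (hC'S hx).1
  · refine hC'm.trans ?_
    rw [compl_inter]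
    calc _ ≤ angleMeasure Cᶜ + 2 * ENNReal.ofReal δ + ENNReal.ofReal δ := by
          gcongr
          exact (measure_union_le _ _).trans (add_le_add_right hm' _)
      _ = _ := by ring
  · refine (measure_mono fun x hx hxW => ?_).trans hm'
    exact (show 2 * δ ≤ _ from hx).not_gt hxW.1

lemma exists_disc_sequence (hD : IsOpen D) {V : ℕ → Set F} (hV : ∀ k, IsOpen (V k)) {δ : ℕ → ℝ}
    (hδ : ∀ k, 0 < δ k)
    (hstep : ∀ k, ∀ z ∈ V k, ∃ φ : ℂ → F, Differentiable ℂ φ ∧ φ 0 = 0 ∧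
      (∀ w ∈ closedBall (0 : ℂ) 1, z + φ w ∈ D ∧ ‖φ w‖ < 2 * δ k) ∧
      angleMeasure {y | z + φ (circlePt y) ∉ V (k + 1)} < ENNReal.ofReal (δ k))
    {ψ : ℂ → F} (hψ : Differentiable ℂ ψ) (hψD : MapsTo ψ (closedBall 0 1) D)
    {C₀ : Set Angles} (hC₀ : IsClosed C₀) (hCV : ∀ x ∈ C₀, ψ (circlePt x) ∈ V 0) :
    ∃ (Φ : ℕ → ℂ → F) (C : ℕ → Set Angles), C 0 = C₀ ∧ (∀ k, Differentiable ℂ (Φ k)) ∧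
      (∀ k, Φ k 0 = ψ 0) ∧ (∀ k, MapsTo (Φ k) (closedBall 0 1) D) ∧ (∀ k, IsClosed (C k)) ∧
      (∀ k, ∀ x ∈ C k, Φ k (circlePt x) ∈ V k) ∧ (∀ k, C (k + 1) ⊆ C k) ∧
      (∀ k, angleMeasure (C (k + 1))ᶜ ≤ angleMeasure (C k)ᶜ + 3 * ENNReal.ofReal (δ k)) ∧
      ∀ k, angleMeasure {x | 2 * δ k ≤ ‖Φ (k + 1) (circlePt x) - Φ k (circlePt x)‖} ≤
        2 * ENNReal.ofReal (δ k) := by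
  let P : ℕ → (ℂ → F) × Set Angles → Prop := fun k p =>
    Differentiable ℂ p.1 ∧ p.1 0 = ψ 0 ∧ MapsTo p.1 (closedBall 0 1) D ∧ IsClosed p.2 ∧
      ∀ x ∈ p.2, p.1 (circlePt x) ∈ V k
  have hnext : ∀ k p, P k p → ∃ p', P (k + 1) p' ∧ p'.2 ⊆ p.2 ∧
      angleMeasure p'.2ᶜ ≤ angleMeasure p.2ᶜ + 3 * ENNReal.ofReal (δ k) ∧
      angleMeasure {x | 2 * δ k ≤ ‖p'.1 (circlePt x) - p.1 (circlePt x)‖} ≤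
        2 * ENNReal.ofReal (δ k) := by
    rintro k ⟨φ, C⟩ ⟨h1, h2, h3, h4, h5⟩
    obtain ⟨Φ, C', hCC', g1, g2, g3, g4, g5, g6, g7⟩ :=
      exists_disc_step hD (hV (k + 1)) (hδ k) (hstep k) h1 h3 h4 h5
    exact ⟨(Φ, C'), ⟨g1, g2.trans h2, g3, g4, g5⟩, hCC', g6, g7⟩
  choose! g hg using hnext
  let f : ℕ → (ℂ → F) × Set Angles := fun k => Nat.rec (ψ, C₀) g k
  have hf : ∀ k, P k (f k) := fun k => by
    induction k with
    | zero => exact ⟨hψ, rfl, hψD, hC₀, hCV⟩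
    | succ k ih => exact (hg k _ ih).1
  exact ⟨fun k => (f k).1, fun k => (f k).2, rfl, fun k => (hf k).1, fun k => (hf k).2.1,
    fun k => (hf k).2.2.1, fun k => (hf k).2.2.2.1, fun k => (hf k).2.2.2.2,
    fun k => (hg k _ (hf k)).2.1, fun k => (hg k _ (hf k)).2.2.1, fun k => (hg k _ (hf k)).2.2.2⟩

end Iteration

section Convergence

/-- A sequence whose steps are summably small off sets of summable measure converges almost
everywhere. -/
lemma ae_exists_tendsto_of_measure_le {α E : Type*} {m : MeasurableSpace α} {μ : Measure α}
    [NormedAddCommGroup E] [CompleteSpace E] {f : ℕ → α → E} {δ : ℕ → ℝ} (hδ : Summable δ)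
    (h : ∑' k, μ {x | δ k ≤ ‖f (k + 1) x - f k x‖} ≠ ⊤) :
    ∀ᵐ x ∂μ, ∃ L, Tendsto (fun k => f k x) atTop (𝓝 L) := by
  filter_upwards [ae_eventually_notMem h] with x hx
  obtain ⟨N, hN⟩ := eventually_atTop.1 hx
  have hc : CauchySeq fun k => f (k + N) x := by
    refine cauchySeq_of_dist_le_of_summable (fun k => δ (k + N)) (fun k => ?_)
      ((summable_nat_add_iff N).2 hδ)
    have := not_le.1 (hN (k + N) (Nat.le_add_left N k))
    rw [dist_comm, dist_eq_norm, Nat.succ_eq_add_one, add_right_comm]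
    exact this.le
  obtain ⟨L, hL⟩ := cauchySeq_tendsto_of_complete hc
  exact ⟨L, (tendsto_add_atTop_iff_nat N).1 hL⟩

lemma measure_compl_iInter_le {α : Type*} {m : MeasurableSpace α} {μ : Measure α}
    {C : ℕ → Set α} (hC : ∀ k, C (k + 1) ⊆ C k) {d : ℕ → ENNReal}
    (h : ∀ k, μ (C (k + 1))ᶜ ≤ μ (C k)ᶜ + d k) :
    μ (⋂ k, C k)ᶜ ≤ μ (C 0)ᶜ + ∑' k, d k := by
  have hk : ∀ k, μ (C k)ᶜ ≤ μ (C 0)ᶜ + ∑ i ∈ Finset.range k, d i := fun k => by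
    induction k with
    | zero => simp
    | succ k ih =>
      rw [Finset.sum_range_succ, ← add_assoc]
      exact (h k).trans (add_le_add_left ih _)
  rw [compl_iInter, Monotone.measure_iUnion
    (monotone_nat_of_le_succ fun k => compl_subset_compl.2 (hC k))]
  exact iSup_le fun k => (hk k).trans (add_le_add_right (ENNReal.sum_le_tsum _) _)

variable [CompleteSpace F] {𝒜 : ApproachData F} {A D : Set F}

lemma exists_convergent_discs (hD : IsOpen D) (h𝒜 : IsApproachSystem D 𝒜)
    (hreg : ∀ a ∈ A, PlrgAtA (H := F) 𝒜 A D a) {z₀ : F} (hz₀ : z₀ ∈ D) {ε : ℝ} (hε : 0 < ε) :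
    ∃ (Φ : ℕ → ℂ → F) (Γ : Set Angles), IsClosed Γ ∧ (∀ k, Differentiable ℂ (Φ k)) ∧
      (∀ k, Φ k 0 = z₀) ∧ (∀ k, MapsTo (Φ k) (closedBall 0 1) D) ∧
      (∀ᵐ x ∂angleMeasure, ∃ L, Tendsto (fun k => Φ k (circlePt x)) atTop (𝓝 L) ∧
        (x ∈ Γ → L ∈ closure A)) ∧
      angleMeasure Γᶜ < ENNReal.ofReal (omegaA (H := F) 𝒜 A D z₀ + ε) := by
  set δ : ℕ → ℝ := fun k => ε / 16 / 2 / 2 ^ k with hδdef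
  have hδ : ∀ k, 0 < δ k := fun k => by positivity
  have hsum : HasSum δ (ε / 16) := hasSum_geometric_two' _
  have htsum : ∑' k, ENNReal.ofReal (δ k) = ENNReal.ofReal (ε / 16) := by
    rw [← ENNReal.ofReal_tsum_of_nonneg (fun k => (hδ k).le) hsum.summable, hsum.tsum_eq]
  set V : ℕ → Set F := fun k => smallExtremalSet 𝒜 A D (δ k)
  have hω0 : hFunA (H := F) 𝒜 A D z₀ ≤ omegaA (H := F) 𝒜 A D z₀ := by
    refine hFunA_le_omegaA (fun R hR => (h𝒜.2.1 z₀ R hR).2) ?_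
    obtain ⟨R, hR, hzR, -⟩ := h𝒜.2.2.1 z₀ hz₀ univ isOpen_univ (mem_univ _)
    exact ⟨R, hR, hzR⟩
  have hω : 0 ≤ omegaA (H := F) 𝒜 A D z₀ := (hFunA_nonneg hz₀).trans hω0
  have h1 : (discMeasure (V 0) D z₀).toReal < omegaA (H := F) 𝒜 A D z₀ + ε / 4 := by
    refine lt_of_le_of_lt (discMeasure_le_hFunA (𝒜 := 𝒜) (A := A) hD (isOpen_smallExtremalSet _)
      (fun a ha R hR => ?_) hz₀) (by linarith)
    filter_upwards [self_mem_nhdsWithin,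
      eventually_mem_smallExtremalSet h𝒜.2.1 hreg (hδ 0) ha hR] with w hw hwV
    exact ⟨hwV, (h𝒜.2.1 a R hR).2 hw⟩
  obtain ⟨φ, ⟨hφ, hφ0, hφD⟩, hm⟩ := discMeasure_lt_iff.1
    ((ENNReal.lt_ofReal_iff_toReal_lt (ne_top_of_le_ne_top ENNReal.one_ne_top
      (discMeasure_le_one hz₀))).2 h1)
  set ψ : ℂ → F := fun w => z₀ + φ w
  have hψ : Differentiable ℂ ψ := (differentiable_const _).add hφ
  have hS : IsOpen {x | ψ (circlePt x) ∈ V 0} :=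
    (isOpen_smallExtremalSet _).preimage (hψ.continuous.comp continuous_circlePt)
  obtain ⟨C₀, hC₀S, hC₀, hC₀m⟩ := exists_isCompact_measure_compl_le angleMeasure
    hS.measurableSet (ε := ENNReal.ofReal (ε / 4)) (by simpa using hε)
  obtain ⟨Φ, C, hC0, hΦ, hΦ0, hΦD, hC, hCV, hCC, hCm, hΦm⟩ := exists_disc_sequence hD
    (fun k => isOpen_smallExtremalSet (δ k)) hδ
    (fun k z hz => exists_disc_of_mem_smallExtremalSet hD h𝒜.2.1 hreg (hδ (k + 1)) hz)
    hψ hφD hC₀.isClosed hC₀S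
  refine ⟨Φ, ⋂ k, C k, isClosed_iInter hC, hΦ, fun k => by simp [hΦ0, ψ, hφ0], hΦD, ?_, ?_⟩
  · have hfin : ∑' k, angleMeasure {x | 2 * δ k ≤
        ‖Φ (k + 1) (circlePt x) - Φ k (circlePt x)‖} ≠ ⊤ := by
      refine ne_top_of_le_ne_top ?_ (ENNReal.tsum_le_tsum hΦm)
      rw [ENNReal.tsum_mul_left, htsum]
      exact ENNReal.mul_ne_top (by simp) ENNReal.ofReal_ne_top
    filter_upwards [ae_exists_tendsto_of_measure_le (f := fun k x => Φ k (circlePt x))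
      (hsum.summable.mul_left 2) hfin] with x ⟨L, hL⟩
    refine ⟨L, hL, fun hx => Metric.mem_closure_iff.2 fun η hη => ?_⟩
    obtain ⟨k, hk1, hk2⟩ := (((Metric.tendsto_nhds.1 hL) (η / 2) (half_pos hη)).and
      (hsum.summable.tendsto_atTop_zero.eventually_lt_const (half_pos hη))).exists
    obtain ⟨a, ha, hda⟩ := exists_dist_lt_of_mem_smallExtremalSet (hCV k x (mem_iInter.1 hx k))
    refine ⟨a, ha, ?_⟩
    have := dist_triangle_left L a (Φ k (circlePt x))
    linarith
  · calc _ ≤ angleMeasure (C 0)ᶜ + ∑' k, 3 * ENNReal.ofReal (δ k) :=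
          measure_compl_iInter_le hCC hCm
      _ = angleMeasure C₀ᶜ + 3 * ENNReal.ofReal (ε / 16) := by
          rw [hC0, ENNReal.tsum_mul_left, htsum]
      _ ≤ ENNReal.ofReal (omegaA (H := F) 𝒜 A D z₀ + ε / 4) + ENNReal.ofReal (ε / 4) +
            3 * ENNReal.ofReal (ε / 16) := by
          gcongr
          exact hC₀m.trans (add_le_add_left hm.le _)
      _ = ENNReal.ofReal (omegaA (H := F) 𝒜 A D z₀ + ε / 4 + ε / 4 + 3 * (ε / 16)) := by
          rw [ENNReal.ofReal_add (p := _ + _ + _) (by positivity) (by positivity),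
            ENNReal.ofReal_add (p := _ + _) (by positivity) (by positivity),
            ENNReal.ofReal_mul (by norm_num)]
          norm_num
      _ < _ := (ENNReal.ofReal_lt_ofReal_iff (by positivity)).2 (by linarith)

end Convergence

section Poisson

lemma poissonKernel_nonneg {t z : ℂ} (ht : t ∈ ball (0 : ℂ) 1) (hz : ‖z‖ = 1) :
    0 ≤ poissonKernel 0 t z := by
  have ht : ‖t‖ < 1 := by simpa using ht
  rw [poissonKernel_def, sub_zero, sub_zero, hz]
  have : ‖t‖ ^ 2 ≤ 1 := pow_le_one₀ (norm_nonneg _) ht.le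
  exact div_nonneg (by linarith) (by positivity)

lemma poissonKernel_le {t z : ℂ} (ht : t ∈ ball (0 : ℂ) 1) (hz : ‖z‖ = 1) :
    poissonKernel 0 t z ≤ (1 + ‖t‖) / (1 - ‖t‖) := by
  rw [poissonKernel_eq_re_herglotzRieszKernel]
  simpa [herglotzRieszKernel_def] using re_herglotzRieszKernel_le (by simpa using hz) ht

lemma continuousOn_poissonKernel_sphere {t : ℂ} (ht : t ∈ ball (0 : ℂ) 1) :
    ContinuousOn (poissonKernel 0 t) (sphere 0 |1|) := by
  rw [poissonKernel_eq_re_herglotzRieszKernel]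
  exact continuous_re.comp_continuousOn (continuousOn_herglotzRieszKernel_sphere ht)

lemma norm_circleMap_zero_one (θ : ℝ) : ‖circleMap 0 1 θ‖ = 1 := by simp

variable {f : ℂ → F}

lemma circleIntegrable_poissonKernel_smul {t : ℂ} (ht : t ∈ ball (0 : ℂ) 1)
    (hf : CircleIntegrable f 0 1) : CircleIntegrable (poissonKernel 0 t • f) 0 1 :=
  hf.continuousOn_smul (continuousOn_poissonKernel_sphere ht)

lemma norm_circleAverage_poissonKernel_smul_le {t : ℂ} (ht : t ∈ ball (0 : ℂ) 1)
    (hf : CircleIntegrable f 0 1) :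
    ‖Real.circleAverage (poissonKernel 0 t • f) 0 1‖ ≤
      (1 + ‖t‖) / (1 - ‖t‖) * Real.circleAverage (fun z => ‖f z‖) 0 1 := by
  have hC : 0 ≤ (1 + ‖t‖) / (1 - ‖t‖) :=
    (poissonKernel_nonneg ht norm_one).trans (poissonKernel_le ht norm_one)
  simp only [Real.circleAverage_def, norm_smul, smul_eq_mul]
  rw [Real.norm_of_nonneg (by positivity), mul_left_comm, ← intervalIntegral.integral_const_mul]
  gcongr
  refine intervalIntegral.norm_integral_le_of_norm_le (by positivity)
    (Eventually.of_forall fun θ _ => ?_) (IntervalIntegrable.norm hf |>.const_mul _)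
  rw [Pi.smul_apply', norm_smul, Real.norm_of_nonneg (poissonKernel_nonneg ht (by simp))]
  gcongr
  exact poissonKernel_le ht (by simp)

lemma norm_sub_circleAverage_poissonKernel_smul_le [CompleteSpace F] {Φ : ℂ → F}
    (hΦ : Differentiable ℂ Φ) {t : ℂ} (ht : t ∈ ball (0 : ℂ) 1) (hf : CircleIntegrable f 0 1) :
    ‖Φ t - Real.circleAverage (poissonKernel 0 t • f) 0 1‖ ≤
      (1 + ‖t‖) / (1 - ‖t‖) * Real.circleAverage (fun z => ‖Φ z - f z‖) 0 1 := by
  have hΦi : CircleIntegrable Φ 0 1 := hΦ.continuous.continuousOn.circleIntegrable zero_le_one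
  rw [← hΦ.diffContOnCl.circleAverage_poissonKernel_smul ht,
    ← Real.circleAverage_sub (circleIntegrable_poissonKernel_smul ht hΦi)
      (circleIntegrable_poissonKernel_smul ht hf), ← smul_sub]
  exact norm_circleAverage_poissonKernel_smul_le ht (hΦi.sub hf)

/-- Holomorphic discs converging in mean on the circle converge locally uniformly to the Poisson
integral of their boundary limit. -/
lemma tendstoLocallyUniformlyOn_circleAverage_poissonKernel_smul [CompleteSpace F]
    {Φ : ℕ → ℂ → F} (hΦ : ∀ k, Differentiable ℂ (Φ k)) (hf : CircleIntegrable f 0 1)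
    (h : Tendsto (fun k => Real.circleAverage (fun z => ‖Φ k z - f z‖) 0 1) atTop (𝓝 0)) :
    TendstoLocallyUniformlyOn Φ (fun t => Real.circleAverage (poissonKernel 0 t • f) 0 1) atTop
      (ball 0 1) := by
  rw [tendstoLocallyUniformlyOn_iff_forall_isCompact isOpen_ball]
  intro K hK hKc
  obtain ⟨C, hC⟩ := (hKc.bddAbove_image (f := fun t : ℂ => (1 + ‖t‖) / (1 - ‖t‖))
    (ContinuousOn.div (by fun_prop) (by fun_prop) fun t ht => by
      have : ‖t‖ < 1 := by simpa using hK ht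
      linarith))
  have hC' : Tendsto (fun k => C * Real.circleAverage (fun z => ‖Φ k z - f z‖) 0 1) atTop
      (𝓝 0) := by simpa using h.const_mul C
  rw [Metric.tendstoUniformlyOn_iff]
  intro ε hε
  filter_upwards [hC'.eventually_lt_const hε] with k hk t ht
  rw [dist_comm, dist_eq_norm]
  refine lt_of_le_of_lt ((norm_sub_circleAverage_poissonKernel_smul_le (hΦ k) (hK ht) hf).trans
    ?_) hk
  gcongr
  · exact Real.circleAverage_nonneg_of_nonneg fun _ _ => norm_nonneg _
  · exact hC (mem_image_of_mem _ ht)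

lemma tendsto_circleAverage_norm_sub {E : Type*} [NormedAddCommGroup E] {Φ : ℕ → ℂ → E}
    {f : ℂ → E} (hΦ : ∀ k, Continuous (Φ k)) {M : ℝ}
    (hM : ∀ k z, ‖z‖ = 1 → ‖Φ k z‖ ≤ M)
    (hf : ∀ᵐ θ : ℝ, Tendsto (fun k => Φ k (circleMap 0 1 θ)) atTop (𝓝 (f (circleMap 0 1 θ)))) :
    AEStronglyMeasurable (fun θ : ℝ => f (circleMap 0 1 θ)) ∧
    (∀ᵐ θ : ℝ, ‖f (circleMap 0 1 θ)‖ ≤ M) ∧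
    Tendsto (fun k => Real.circleAverage (fun z => ‖Φ k z - f z‖) 0 1) atTop (𝓝 0) := by
  have hc : ∀ k, Continuous fun θ : ℝ => Φ k (circleMap 0 1 θ) :=
    fun k => (hΦ k).comp (continuous_circleMap 0 1)
  have hfm : AEStronglyMeasurable (fun θ : ℝ => f (circleMap 0 1 θ)) :=
    aestronglyMeasurable_of_tendsto_ae atTop (fun k => (hc k).aestronglyMeasurable) hf
  have hfM : ∀ᵐ θ : ℝ, ‖f (circleMap 0 1 θ)‖ ≤ M := by
    filter_upwards [hf] with θ hθ
    exact le_of_tendsto hθ.norm (Eventually.of_forall fun k => hM k _ (by simp))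
  refine ⟨hfm, hfM, ?_⟩
  have hlim : Tendsto (fun k => ∫ θ in (0 : ℝ)..2 * π, ‖Φ k (circleMap 0 1 θ) -
      f (circleMap 0 1 θ)‖) atTop (𝓝 (∫ _ in (0 : ℝ)..2 * π, (0 : ℝ))) := by
    refine intervalIntegral.tendsto_integral_filter_of_dominated_convergence (fun _ => M + M)
      (Eventually.of_forall fun k =>
        ((hc k).aestronglyMeasurable.sub hfm.restrict).norm) (Eventually.of_forall fun k => ?_)
      intervalIntegrable_const ?_
    · filter_upwards [hfM] with θ hθ _
      rw [norm_norm]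
      exact (norm_sub_le _ _).trans (add_le_add (hM k _ (by simp)) hθ)
    · filter_upwards [hf] with θ hθ _
      exact tendsto_iff_norm_sub_tendsto_zero.1 hθ
  simpa [Real.circleAverage_def] using hlim.const_mul (2 * π)⁻¹

end Poisson

section Fatou

lemma norm_sub_mul_cos_le {α : ℝ} (hα : α < π / 2) {ζ t : ℂ} (hζ : ‖ζ‖ = 1)
    (ht : t ∈ stolzRegion α ζ) (hd : ‖ζ - t‖ ≤ Real.cos α) :
    ‖ζ - t‖ * Real.cos α ≤ 2 * (1 - ‖t‖) := by
  obtain ⟨htb, harg⟩ := ht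
  have htb : ‖t‖ < 1 := by simpa using htb
  have hζ0 : ζ ≠ 0 := by rintro rfl; simp at hζ
  set w := (ζ - t) / ζ with hw
  have hwn : ‖w‖ = ‖ζ - t‖ := by rw [hw, norm_div, hζ, div_one]
  have htw : ‖t‖ = ‖1 - w‖ := by
    have : t = ζ * (1 - w) := by rw [hw]; field_simp; ring
    rw [this, norm_mul, hζ, one_mul]
  have hre : ‖ζ - t‖ * Real.cos α ≤ w.re := by
    rw [← Complex.norm_mul_cos_arg w, hwn, ← Real.cos_abs w.arg]
    gcongr
    exact Real.cos_le_cos_of_nonneg_of_le_pi (abs_nonneg _) (by linarith [Real.pi_pos]) harg.le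
  have hsq : ‖t‖ ^ 2 = 1 - 2 * w.re + ‖ζ - t‖ ^ 2 := by
    rw [htw, ← hwn, ← Complex.normSq_eq_norm_sq, ← Complex.normSq_eq_norm_sq,
      Complex.normSq_apply, Complex.normSq_apply]
    simp
    ring
  nlinarith [norm_nonneg t, norm_nonneg (ζ - t), mul_le_mul_of_nonneg_left hd (norm_nonneg (ζ - t))]

/-- In a Stolz region the Poisson kernel is bounded by the distance to the vertex over its square,
and also over the square of the distance from the vertex to the boundary point. -/
lemma poissonKernel_le_of_mul_le {c : ℝ} (hc : 0 < c) (hc1 : c ≤ 1) {ζ t z : ℂ} (hζ : ‖ζ‖ = 1)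
    (hz : ‖z‖ = 1) (ht : ‖t‖ < 1) (hct : c * ‖ζ - t‖ ≤ 1 - ‖t‖) :
    poissonKernel 0 t z * (c * ‖ζ - t‖) ^ 2 ≤ 2 * ‖ζ - t‖ ∧
      poissonKernel 0 t z * (c * ‖z - ζ‖) ^ 2 ≤ 8 * ‖ζ - t‖ := by
  have h1 : 1 - ‖t‖ ≤ ‖ζ - t‖ := by simpa [hζ] using norm_sub_norm_le ζ t
  have h2 : 1 - ‖t‖ ≤ ‖z - t‖ := by simpa [hz] using norm_sub_norm_le z t
  have h3 : ‖z - ζ‖ ≤ ‖z - t‖ + ‖ζ - t‖ := by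
    simpa [norm_sub_rev t ζ] using norm_sub_le_norm_sub_add_norm_sub z t ζ
  have h0 : 0 < ‖z - t‖ := by linarith
  have hnum : (1 - ‖t‖ ^ 2) ≤ 2 * ‖ζ - t‖ := by nlinarith [norm_nonneg t]
  have hnum0 : 0 ≤ 1 - ‖t‖ ^ 2 := by nlinarith [norm_nonneg t]
  have h4 : c * ‖z - ζ‖ ≤ 2 * ‖z - t‖ := by nlinarith
  rw [poissonKernel_def, sub_zero, sub_zero, hz, one_pow, div_mul_eq_mul_div, div_mul_eq_mul_div,
    div_le_iff₀ (by positivity), div_le_iff₀ (by positivity)]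
  constructor
  · have : c * ‖ζ - t‖ ≤ ‖z - t‖ := hct.trans h2
    gcongr
  · calc (1 - ‖t‖ ^ 2) * (c * ‖z - ζ‖) ^ 2 ≤ (2 * ‖ζ - t‖) * (2 * ‖z - t‖) ^ 2 := by gcongr
      _ = _ := by ring

lemma mul_abs_sub_le_norm_circleMap_sub {s x : ℝ} (h : |s - x| ≤ π) :
    2 / π * |s - x| ≤ ‖circleMap 0 1 s - circleMap 0 1 x‖ := by
  have h1 : circleMap 0 1 s - circleMap 0 1 x = exp (x * I) * (exp (I * ((s - x : ℝ) : ℂ)) - 1) := by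
    simp only [circleMap, zero_add, ofReal_one, one_mul, mul_sub, mul_one, ← Complex.exp_add]
    congr 2
    push_cast
    ring
  rw [h1, norm_mul, norm_exp_ofReal_mul_I, one_mul, Complex.norm_exp_I_mul_ofReal_sub_one,
    norm_mul, Real.norm_eq_abs, Real.norm_eq_abs, abs_two]
  have h2 : |(s - x) / 2| = |s - x| / 2 := by rw [abs_div, abs_two]
  have := Real.mul_abs_le_abs_sin (x := (s - x) / 2) (by rw [h2]; linarith)
  rw [h2] at this
  linarith

lemma poissonKernel_mul_le {c : ℝ} (hc : 0 < c) (hc1 : c ≤ 1) {t : ℂ} {x : ℝ} (ht : ‖t‖ < 1)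
    (hct : c * ‖circleMap 0 1 x - t‖ ≤ 1 - ‖t‖) {s N h M : ℝ} (hs : |s - x| ≤ π) (hN : 0 < N)
    (hh : 0 ≤ h) (hM : h ≤ M) :
    poissonKernel 0 t (circleMap 0 1 s) * h ≤
      2 / (c ^ 2 * ‖circleMap 0 1 x - t‖) *
        (closedBall x (N * ‖circleMap 0 1 x - t‖)).indicator (fun _ => h) s +
      4 * π ^ 2 * ‖circleMap 0 1 x - t‖ * M / c ^ 2 *
        ((N * ‖circleMap 0 1 x - t‖) ^ 2 + (s - x) ^ 2)⁻¹ := by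
  obtain ⟨h1, h2⟩ := poissonKernel_le_of_mul_le hc hc1 (norm_circleMap_zero_one x)
    (norm_circleMap_zero_one s) ht hct
  set d := ‖circleMap 0 1 x - t‖
  have hd : 0 < d := by
    have : 1 - ‖t‖ ≤ d := by simpa using norm_sub_norm_le (circleMap 0 1 x) t
    linarith
  have hP := poissonKernel_nonneg (t := t) (by simpa using ht) (norm_circleMap_zero_one s)
  set P := poissonKernel 0 t (circleMap 0 1 s)
  have hM0 : 0 ≤ M := hh.trans hM
  by_cases hsN : s ∈ closedBall x (N * d)
  · rw [indicator_of_mem hsN]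
    have : P ≤ 2 / (c ^ 2 * d) := by
      rw [le_div_iff₀ (by positivity)]
      have : P * (c ^ 2 * d) * d ≤ 2 * d := by linarith
      exact le_of_mul_le_mul_right this hd
    have h3 : P * h ≤ 2 / (c ^ 2 * d) * h := by gcongr
    have h4 : 0 ≤ 4 * π ^ 2 * d * M / c ^ 2 * ((N * d) ^ 2 + (s - x) ^ 2)⁻¹ := by positivity
    linarith
  · rw [indicator_of_notMem hsN, mul_zero, zero_add]
    have hsN : N * d < |s - x| := by simpa [Real.dist_eq] using hsN
    have hNd : 0 < N * d := by positivity
    have h3 : (N * d) ^ 2 + (s - x) ^ 2 ≤ 2 * |s - x| ^ 2 := by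
      rw [← sq_abs (s - x)]; nlinarith
    have h4 : P * (c * (2 / π * |s - x|)) ^ 2 ≤ 8 * d := by
      refine le_trans ?_ h2
      gcongr
      exact mul_abs_sub_le_norm_circleMap_sub hs
    rw [← div_eq_mul_inv, le_div_iff₀ (by positivity), le_div_iff₀ (by positivity)]
    calc P * h * ((N * d) ^ 2 + (s - x) ^ 2) * c ^ 2
        ≤ P * M * (2 * |s - x| ^ 2) * c ^ 2 := by gcongr
      _ = P * (c * (2 / π * |s - x|)) ^ 2 * (π ^ 2 * M / 2) := by
          field_simp
      _ ≤ 8 * d * (π ^ 2 * M / 2) := by gcongr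
      _ = _ := by ring

end Fatou

section FatouLimit

variable {f : ℂ → F} {L : F} {M x : ℝ}

lemma circleIntegrable_of_ae_norm_le {E : Type*} [NormedAddCommGroup E] {f : ℂ → E}
    (hfm : AEStronglyMeasurable fun θ : ℝ => f (circleMap 0 1 θ))
    (hfM : ∀ᵐ θ : ℝ, ‖f (circleMap 0 1 θ)‖ ≤ M) : CircleIntegrable f 0 1 := by
  rw [CircleIntegrable, intervalIntegrable_iff]
  exact Measure.integrableOn_of_bounded (by simp [ENNReal.mul_eq_top]) hfm (ae_restrict_of_ae hfM)

/-- Pointwise estimate of a Poisson integral by an average over a small ball and a tail. -/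
lemma norm_circleAverage_poissonKernel_smul_sub_le [CompleteSpace F]
    (hf : CircleIntegrable f 0 1) (hfm : AEStronglyMeasurable fun θ : ℝ => f (circleMap 0 1 θ))
    (hfM : ∀ᵐ θ : ℝ, ‖f (circleMap 0 1 θ) - L‖ ≤ M) {c : ℝ} (hc : 0 < c) (hc1 : c ≤ 1) {t : ℂ}
    (ht : ‖t‖ < 1) (hct : c * ‖circleMap 0 1 x - t‖ ≤ 1 - ‖t‖) {N : ℝ} (hN : 0 < N) :
    ‖Real.circleAverage (poissonKernel 0 t • f) 0 1 - L‖ ≤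
      4 * N / c ^ 2 * (⨍ s in closedBall x (N * ‖circleMap 0 1 x - t‖),
        ‖f (circleMap 0 1 s) - L‖) + 4 * π ^ 3 * M / c ^ 2 * N⁻¹ := by
  have htb : t ∈ ball (0 : ℂ) 1 := by simpa using ht
  have hd : 0 < ‖circleMap 0 1 x - t‖ := by
    have : 1 - ‖t‖ ≤ ‖circleMap 0 1 x - t‖ := by simpa using norm_sub_norm_le (circleMap 0 1 x) t
    linarith
  have hM : 0 ≤ M := by
    obtain ⟨θ, hθ⟩ := hfM.exists
    exact (norm_nonneg _).trans hθ
  have hconst : Real.circleAverage (poissonKernel 0 t • fun _ => L) 0 1 = L :=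
    DiffContOnCl.circleAverage_poissonKernel_smul diffContOnCl_const htb
  have hci : CircleIntegrable (fun _ : ℂ => L) 0 1 := circleIntegrable_const L 0 1
  have hh : AEStronglyMeasurable fun s : ℝ => ‖f (circleMap 0 1 s) - L‖ :=
    (hfm.sub aestronglyMeasurable_const).norm
  set d := ‖circleMap 0 1 x - t‖ with hddef
  set B := closedBall x (N * d) with hB
  have hNd : 0 < N * d := by positivity
  have hBi : Integrable (B.indicator fun s : ℝ => ‖f (circleMap 0 1 s) - L‖) := by
    rw [integrable_indicator_iff measurableSet_closedBall]
    exact Measure.integrableOn_of_bounded measure_closedBall_lt_top.ne hh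
      (ae_restrict_of_ae (by simpa using hfM))
  have hcont : Continuous fun s : ℝ => ((N * d) ^ 2 + (s - x) ^ 2)⁻¹ :=
    Continuous.inv₀ (by fun_prop) fun s => by positivity
  have hI1 : ∫ s in (x - π)..(x + π), B.indicator (fun s : ℝ => ‖f (circleMap 0 1 s) - L‖) s ≤
      2 * (N * d) * ⨍ s in B, ‖f (circleMap 0 1 s) - L‖ := by
    rw [intervalIntegral.integral_of_le (by linarith [Real.pi_pos])]
    refine (setIntegral_le_integral hBi (Eventually.of_forall fun s =>
      indicator_nonneg (fun _ _ => norm_nonneg _) s)).trans (le_of_eq ?_)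
    rw [integral_indicator measurableSet_closedBall, setAverage_eq, measureReal_def,
      Real.volume_closedBall, ENNReal.toReal_ofReal (by positivity), smul_eq_mul,
      mul_inv_cancel_left₀ (by positivity)]
  have hI2 : ∫ s in (x - π)..(x + π), ((N * d) ^ 2 + (s - x) ^ 2)⁻¹ ≤ (N * d)⁻¹ * π := by
    rw [intervalIntegral.integral_comp_sub_right (fun u => ((N * d) ^ 2 + u ^ 2)⁻¹),
      integral_inv_sq_add_sq hNd.ne']
    gcongr
    linarith [Real.arctan_lt_pi_div_two ((x + π - x) / (N * d)),
      Real.neg_pi_div_two_lt_arctan ((x - π - x) / (N * d))]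
  have hkey : ‖∫ s in (x - π)..(x + π), poissonKernel 0 t (circleMap 0 1 s) •
      (f (circleMap 0 1 s) - L)‖ ≤ 2 / (c ^ 2 * d) *
        (2 * (N * d) * ⨍ s in B, ‖f (circleMap 0 1 s) - L‖) +
      4 * π ^ 2 * d * M / c ^ 2 * ((N * d)⁻¹ * π) := by
    refine (intervalIntegral.norm_integral_le_of_norm_le (by linarith [Real.pi_pos]) (g := fun s =>
      2 / (c ^ 2 * d) * B.indicator (fun s : ℝ => ‖f (circleMap 0 1 s) - L‖) s +
        4 * π ^ 2 * d * M / c ^ 2 * ((N * d) ^ 2 + (s - x) ^ 2)⁻¹) ?_ ?_).trans ?_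
    · filter_upwards [hfM] with s hs hsI
      rw [norm_smul, Real.norm_of_nonneg (poissonKernel_nonneg htb (by simp))]
      have := poissonKernel_mul_le hc hc1 ht hct (s := s) (N := N)
        (abs_le.2 ⟨by linarith [hsI.1], by linarith [hsI.2]⟩) hN (norm_nonneg _) hs
      simpa only [indicator] using this
    · exact (hBi.intervalIntegrable.const_mul _).add
        ((hcont.intervalIntegrable _ _).const_mul _)
    · rw [intervalIntegral.integral_add (hBi.intervalIntegrable.const_mul _)
        ((hcont.intervalIntegrable _ _).const_mul _), intervalIntegral.integral_const_mul,
        intervalIntegral.integral_const_mul]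
      gcongr
  have heq : Real.circleAverage (poissonKernel 0 t • f) 0 1 - L = (2 * π)⁻¹ •
      ∫ s in (x - π)..(x + π), poissonKernel 0 t (circleMap 0 1 s) •
        (f (circleMap 0 1 s) - L) := by
    nth_rw 1 [← hconst]
    rw [← Real.circleAverage_sub (circleIntegrable_poissonKernel_smul htb hf)
      (circleIntegrable_poissonKernel_smul htb hci), ← smul_sub,
      Real.circleAverage_eq_integral_add (x - π)]
    rw [intervalIntegral.integral_comp_add_right fun s =>
      (poissonKernel 0 t • (f - fun _ => L) : ℂ → F) (circleMap 0 1 s)]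
    rw [zero_add, show 2 * π + (x - π) = x + π by ring]
    rfl
  rw [heq, norm_smul, Real.norm_of_nonneg (by positivity)]
  have hpi : (2 * π)⁻¹ ≤ 1 := inv_le_one_of_one_le₀ (by linarith [Real.pi_gt_three])
  refine (mul_le_of_le_one_left (norm_nonneg _) hpi).trans (hkey.trans (le_of_eq ?_))
  field_simp
  ring

/-- **Fatou's theorem** at a Lebesgue point: the Poisson integral of a bounded function has
the angular limit `L` at every boundary point where `L` is its Lebesgue value. -/
lemma tendsto_circleAverage_poissonKernel_smul_stolzRegion [CompleteSpace F]
    (hfm : AEStronglyMeasurable fun θ : ℝ => f (circleMap 0 1 θ))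
    (hfM : ∀ᵐ θ : ℝ, ‖f (circleMap 0 1 θ)‖ ≤ M)
    (hx : Tendsto (fun r => ⨍ s in closedBall x r, ‖f (circleMap 0 1 s) - L‖) (𝓝[>] 0) (𝓝 0))
    {α : ℝ} (hα0 : 0 < α) (hα : α < π / 2) :
    Tendsto (fun t => Real.circleAverage (poissonKernel 0 t • f) 0 1)
      (𝓝[stolzRegion α (circleMap 0 1 x)] (circleMap 0 1 x)) (𝓝 L) := by
  have hcos : 0 < Real.cos α := Real.cos_pos_of_mem_Ioo ⟨by linarith, hα⟩
  set c := Real.cos α / 2 with hc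
  have hc0 : 0 < c := by positivity
  have hc1 : c ≤ 1 := by linarith [Real.cos_le_one α]
  have hfM' : ∀ᵐ θ : ℝ, ‖f (circleMap 0 1 θ) - L‖ ≤ M + ‖L‖ := by
    filter_upwards [hfM] with θ hθ
    exact (norm_sub_le _ _).trans (by linarith)
  have hf := circleIntegrable_of_ae_norm_le hfm hfM
  set ζ := circleMap 0 1 x
  have hdist : Tendsto (fun t => ‖ζ - t‖) (𝓝[stolzRegion α ζ] ζ) (𝓝[>] 0) := by
    refine tendsto_nhdsWithin_iff.2 ⟨?_, ?_⟩
    · have : Tendsto (fun t => ‖ζ - t‖) (𝓝 ζ) (𝓝 ‖ζ - ζ‖) := by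
        exact (Continuous.norm (by fun_prop)).tendsto ζ
      simpa using this.mono_left nhdsWithin_le_nhds
    · filter_upwards [self_mem_nhdsWithin] with t ht
      refine norm_pos_iff.2 (sub_ne_zero.2 ?_)
      rintro rfl
      simpa [ζ] using ht.1
  rw [tendsto_iff_norm_sub_tendsto_zero, Metric.tendsto_nhds]
  intro ε hε
  have htail : Tendsto (fun N : ℝ => 4 * π ^ 3 * (M + ‖L‖) / c ^ 2 * N⁻¹) atTop (𝓝 0) := by
    have := tendsto_inv_atTop_zero.const_mul (4 * π ^ 3 * (M + ‖L‖) / c ^ 2)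
    rwa [mul_zero] at this
  obtain ⟨N, hN, hN0⟩ :=
    ((htail.eventually_lt_const (half_pos hε)).and (eventually_gt_atTop 0)).exists
  have hscale : Tendsto (fun t => N * ‖ζ - t‖) (𝓝[stolzRegion α ζ] ζ) (𝓝[>] 0) := by
    have := tendsto_nhdsWithin_iff.1 hdist
    refine tendsto_nhdsWithin_iff.2 ⟨by simpa using this.1.const_mul N, ?_⟩
    filter_upwards [this.2] with t ht
    exact mul_pos hN0 ht
  have hmain := ((hx.comp hscale).const_mul (4 * N / c ^ 2))
  rw [mul_zero] at hmain
  filter_upwards [hmain.eventually_lt_const (half_pos hε), self_mem_nhdsWithin,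
    (tendsto_nhdsWithin_iff.1 hdist).1.eventually_lt_const hcos] with t ht htS htd
  have ht1 : ‖t‖ < 1 := by simpa using htS.1
  have hct : c * ‖ζ - t‖ ≤ 1 - ‖t‖ := by
    have : ‖ζ - t‖ * Real.cos α ≤ 2 * (1 - ‖t‖) :=
      norm_sub_mul_cos_le hα (norm_circleMap_zero_one x) htS htd.le
    rw [hc]
    linarith
  have := norm_circleAverage_poissonKernel_smul_sub_le hf hfm hfM' hc0 hc1 ht1 hct hN0
  rw [dist_zero_right, norm_norm]
  simp only [Function.comp_apply] at ht
  linarith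

end FatouLimit

section AngleTransfer

lemma ae_coe_angles {P : Angles → Prop} (h : ∀ᵐ x ∂angleMeasure, P x) : ∀ᵐ θ : ℝ, P θ := by
  have hv : ∀ᵐ x : Angles, P x := by
    rw [AddCircle.volume_eq_smul_haarAddCircle]
    exact Measure.ae_smul_measure h _
  have hcover : (⋃ n : ℤ, Ioc (n • (2 * π)) ((n + 1) • (2 * π))) = univ :=
    iUnion_Ioc_zsmul Real.two_pi_pos
  rw [← Measure.restrict_univ (μ := (volume : Measure ℝ)), ← hcover, ae_restrict_iUnion_iff]
  intro n
  rw [add_smul, one_smul]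
  exact (AddCircle.measurePreserving_mk (2 * π) (n • (2 * π))).quasiMeasurePreserving.ae hv

lemma volume_Ioo_inter_preimage_coe_angles {Γ : Set Angles} (hΓ : MeasurableSet Γ) :
    volume (Ioo 0 (2 * π) ∩ (fun θ : ℝ => (θ : Angles)) ⁻¹' Γ) =
      ENNReal.ofReal (2 * π) * angleMeasure Γ := by
  have h := (AddCircle.measurePreserving_mk (2 * π) 0).measure_preimage hΓ.nullMeasurableSet
  rw [zero_add, ← restrict_Ioo_eq_restrict_Ioc,
    Measure.restrict_apply (AddCircle.measurable_mk' hΓ), inter_comm,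
    AddCircle.volume_eq_smul_haarAddCircle] at h
  exact h

end AngleTransfer

/-- A measurable set of reals contains a measurable subset of full measure, all of whose points are
density points of that subset and satisfy a given almost sure property. -/
lemma exists_subset_forall_density_point {S : Set ℝ} (hS : MeasurableSet S) {P : ℝ → Prop}
    (hP : ∀ᵐ θ : ℝ, P θ) :
    ∃ T ⊆ S, MeasurableSet T ∧ volume T = volume S ∧ ∀ θ ∈ T, P θ ∧
      Tendsto (fun r : ℝ => volume (T ∩ Icc (θ - r) (θ + r)) / ENNReal.ofReal (2 * r))
        (𝓝[>] 0) (𝓝 1) := by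
  have hgood := hP.and (Besicovitch.ae_tendsto_measure_inter_div_of_measurableSet volume hS)
  set N := toMeasurable volume {θ : ℝ | ¬ (P θ ∧ Tendsto (fun r => volume (S ∩ closedBall θ r) /
    volume (closedBall θ r)) (𝓝[>] 0) (𝓝 (S.indicator 1 θ)))}
  have hN : volume N = 0 := (measure_toMeasurable _).trans hgood
  have hTS (B : Set ℝ) : volume ((S \ N) ∩ B) = volume (S ∩ B) := by
    rw [← inter_sdiff_right_comm, measure_sdiff_null hN]
  refine ⟨S \ N, sdiff_subset, hS.diff (measurableSet_toMeasurable _ _), measure_sdiff_null hN,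
    fun θ hθ => ?_⟩
  obtain ⟨hPθ, hd⟩ := not_not.1 fun h => hθ.2 (subset_toMeasurable _ _ h)
  rw [indicator_of_mem hθ.1, Pi.one_apply] at hd
  simp_rw [hTS]
  simp_rw [Real.volume_closedBall, Real.closedBall_eq_Icc] at hd
  exact ⟨hPθ, hd⟩

/-- Almost every point is a Lebesgue point of a bounded measurable function. -/
lemma ae_tendsto_average_closedBall_norm_sub {E : Type*} [NormedAddCommGroup E] {g : ℝ → E}
    {C : ℝ} (hgm : AEStronglyMeasurable g) (hgC : ∀ᵐ θ, ‖g θ‖ ≤ C) :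
    ∀ᵐ θ, Tendsto (fun r => ⨍ s in closedBall θ r, ‖g s - g θ‖) (𝓝[>] 0) (𝓝 0) := by
  have hg : LocallyIntegrable g := locallyIntegrable_iff.2 fun K hK =>
    Measure.integrableOn_of_bounded hK.measure_lt_top.ne hgm (ae_restrict_of_ae hgC)
  filter_upwards [(Besicovitch.vitaliFamily volume).ae_tendsto_average_norm_sub hg] with θ hθ
  exact hθ.comp (Besicovitch.tendsto_filterAt volume θ)

/-- A bounded sequence of entire discs which converges almost everywhere on the unit circle
converges locally uniformly in the unit disc, and the limit has the expected angular limits. -/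
theorem exists_tendstoLocallyUniformlyOn_angularLimit [CompleteSpace F] {Φ : ℕ → ℂ → F}
    {f : ℂ → F} {C : ℝ} (hΦ : ∀ k, Differentiable ℂ (Φ k)) (hC : ∀ k z, ‖z‖ = 1 → ‖Φ k z‖ ≤ C)
    (hf : ∀ᵐ θ : ℝ, Tendsto (fun k => Φ k (circleMap 0 1 θ)) atTop (𝓝 (f (circleMap 0 1 θ)))) :
    ∃ φ : ℂ → F, TendstoLocallyUniformlyOn Φ φ atTop (ball 0 1) ∧
      ∀ᵐ θ : ℝ, ∀ α : ℝ, 0 < α → α < π / 2 →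
        Tendsto φ (𝓝[stolzRegion α (circleMap 0 1 θ)] (circleMap 0 1 θ))
          (𝓝 (f (circleMap 0 1 θ))) := by
  obtain ⟨hfm, hfC, hlim⟩ := tendsto_circleAverage_norm_sub (fun k => (hΦ k).continuous) hC hf
  refine ⟨fun t => Real.circleAverage (poissonKernel 0 t • f) 0 1,
    tendstoLocallyUniformlyOn_circleAverage_poissonKernel_smul hΦ
      (circleIntegrable_of_ae_norm_le hfm hfC) hlim, ?_⟩
  filter_upwards [ae_tendsto_average_closedBall_norm_sub hfm hfC] with θ hθ α hα0 hα
  exact tendsto_circleAverage_poissonKernel_smul_stolzRegion hfm hfC hθ hα0 hα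

/-- Poletsky-type disc construction, existence of
`ε`-candidates: given a bounded open `D ⊆ ℂⁿ` with a system of approach
regions, a nonempty locally pluriregular `A ⊆ D̄` with `ω(·,A,D) < 1` on `D`,
a point `z₀ ∈ D` and `ε > 0`, there is a bounded holomorphic disc through
`z₀` with image in `D̄` whose angular boundary values lie in `Ā` on a set
`Γ₀` of angles, all of whose points are density points, with
`1 − mes Γ₀ / 2π < ω(z₀,A,D) + ε`. -/
theorem poletsky_disc_construction
    {n : ℕ} (D : Set (Fin n → ℂ)) (hDo : IsOpen D)
    (hDb : Bornology.IsBounded D)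
    (𝒜 : ApproachData (Fin n → ℂ)) (h𝒜 : IsApproachSystem D 𝒜)
    (A : Set (Fin n → ℂ)) (hAne : A.Nonempty) (hAD : A ⊆ closure D)
    (hreg : ∀ a ∈ A, PlrgAtA (H := Fin n → ℂ) 𝒜 A D a)
    (homega : ∀ z ∈ D, omegaA (H := Fin n → ℂ) 𝒜 A D z < 1)
    (z₀ : Fin n → ℂ) (hz₀ : z₀ ∈ D) (ε : ℝ) (hε : 0 < ε) :
    ∃ φ : ℂ → (Fin n → ℂ), ∃ Γ₀ : Set ℝ,
      MeasurableSet Γ₀ ∧ Γ₀ ⊆ Set.Ico (0:ℝ) (2 * Real.pi) ∧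
      DifferentiableOn ℂ φ (ball (0:ℂ) 1) ∧
      Bornology.IsBounded (φ '' ball (0:ℂ) 1) ∧
      (∀ θ ∈ Γ₀, Filter.Tendsto
        (fun r : ℝ => MeasureTheory.volume (Γ₀ ∩ Set.Icc (θ - r) (θ + r)) /
          ENNReal.ofReal (2 * r)) (𝓝[>] (0:ℝ)) (𝓝 1)) ∧
      φ 0 = z₀ ∧
      φ '' ball (0:ℂ) 1 ⊆ closure D ∧
      (∀ θ ∈ Γ₀, ∃ L ∈ closure A, ∀ α : ℝ, 0 < α → α < Real.pi / 2 →
        Filter.Tendsto φ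
          (𝓝[stolzRegion α (Complex.exp (θ * Complex.I))]
            (Complex.exp (θ * Complex.I))) (𝓝 L)) ∧
      1 - (MeasureTheory.volume Γ₀).toReal / (2 * Real.pi) <
        omegaA (H := Fin n → ℂ) 𝒜 A D z₀ + ε := by
  obtain ⟨Φ, Γ, hΓ, hΦ, hΦ0, hΦD, hlim, hmeas⟩ := exists_convergent_discs hDo h𝒜 hreg hz₀ hε
  obtain ⟨C, hC⟩ := hDb.exists_norm_le
  set f : ℂ → (Fin n → ℂ) := fun z => limUnder atTop fun k => Φ k z
  have hcoe (θ : ℝ) : circlePt (θ : Angles) = circleMap 0 1 θ := by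
    simp [circlePt_coe, circleMap]
  have hf : ∀ᵐ θ : ℝ,
      Tendsto (fun k => Φ k (circleMap 0 1 θ)) atTop (𝓝 (f (circleMap 0 1 θ))) ∧
        ((θ : Angles) ∈ Γ → f (circleMap 0 1 θ) ∈ closure A) := by
    filter_upwards [ae_coe_angles hlim] with θ ⟨L, hL, hLA⟩
    rw [hcoe] at hL
    have hfL : f (circleMap 0 1 θ) = L := hL.limUnder_eq
    rw [hfL]
    exact ⟨hL, hLA⟩
  obtain ⟨φ, hφ, hang⟩ := exists_tendstoLocallyUniformlyOn_angularLimit hΦ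
    (fun k z hz => hC _ (hΦD k (by simp [hz]))) (hf.mono fun θ hθ => hθ.1)
  have hφD : φ '' ball 0 1 ⊆ closure D := by
    rintro _ ⟨t, ht, rfl⟩
    exact isClosed_closure.mem_of_tendsto (hφ.tendsto_at ht)
      (Eventually.of_forall fun k => subset_closure (hΦD k (ball_subset_closedBall ht)))
  obtain ⟨T, hTS, hT, hTvol, hTd⟩ := exists_subset_forall_density_point
    (measurableSet_Ioo.inter (AddCircle.measurable_mk' hΓ.measurableSet)) (hf.and hang)
  refine ⟨φ, T, hT, fun θ hθ => Ioo_subset_Ico_self (hTS hθ).1,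
    hφ.differentiableOn (Eventually.of_forall fun k => (hΦ k).differentiableOn) isOpen_ball,
    hDb.closure.subset hφD, fun θ hθ => (hTd θ hθ).2, ?_, hφD, fun θ hθ => ?_, ?_⟩
  · refine tendsto_nhds_unique (hφ.tendsto_at (mem_ball_self one_pos)) ?_
    simp only [hΦ0]
    exact tendsto_const_nhds
  · obtain ⟨⟨⟨-, hA⟩, hlimθ⟩, -⟩ := hTd θ hθ
    exact ⟨_, hA (hTS hθ).2, by simpa [circleMap] using hlimθ⟩
  · have hlt := (ENNReal.lt_ofReal_iff_toReal_lt (measure_ne_top _ _)).1 hmeas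
    rw [← measureReal_def, probReal_compl_eq_one_sub hΓ.measurableSet] at hlt
    rwa [hTvol, volume_Ioo_inter_preimage_coe_angles hΓ.measurableSet, ENNReal.toReal_mul,
      ENNReal.toReal_ofReal Real.two_pi_pos.le, mul_div_cancel_left₀ _ Real.two_pi_pos.ne']

end
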